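/- arXiv:1701.06451 — 3 statements merged into one kernel-verified Lean document; each statement's English description precedes it below -/
import Mathlib

section
/- Let r ≥ 2 and let H be a 3-partite 3-graph with vertex classes A, B, C such that |A| = n, and let ε ≥ 0. Suppose every vertex of A has degree at least r and every vertex of B ∪ C has degree at most r. If ν(H) ≤ (1 + ε)·n/2, then the link lk A (a bipartite multigraph on vertex classes B and C) contains at least (1 − (6r − 7)ε)·n/2 connected components that are r-regular C4's. -/
namespace Tripartite

/-- The degree of a vertex `a` in the first class of a 3-partite 3-multihypergraph,
whose edges are given as a multiset of triples (so parallel edges are allowed). -/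
def deg1 {α β γ : Type*} [DecidableEq α] (H : Multiset (α × β × γ)) (a : α) : ℕ :=
  (H.filter fun e => e.1 = a).card

/-- The degree of a vertex `b` in the second class. -/
def deg2 {α β γ : Type*} [DecidableEq β] (H : Multiset (α × β × γ)) (b : β) : ℕ :=
  (H.filter fun e => e.2.1 = b).card

/-- The degree of a vertex `c` in the third class. -/
def deg3 {α β γ : Type*} [DecidableEq γ] (H : Multiset (α × β × γ)) (c : γ) : ℕ :=
  (H.filter fun e => e.2.2 = c).card

/-- `H` is `r`-regular: every vertex of every class has degree exactly `r`. -/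
def IsRegular {α β γ : Type*} [DecidableEq α] [DecidableEq β] [DecidableEq γ]
    (H : Multiset (α × β × γ)) (r : ℕ) : Prop :=
  (∀ a, deg1 H a = r) ∧ (∀ b, deg2 H b = r) ∧ (∀ c, deg3 H c = r)

/-- A matching of `H`: a set of edges of `H` that are pairwise disjoint. -/
def IsMatching {α β γ : Type*} (H : Multiset (α × β × γ)) (M : Finset (α × β × γ)) : Prop :=
  (∀ e ∈ M, e ∈ H) ∧
  ∀ e ∈ M, ∀ f ∈ M, e ≠ f → e.1 ≠ f.1 ∧ e.2.1 ≠ f.2.1 ∧ e.2.2 ≠ f.2.2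

/-- The matching number ν(H): the maximum size of a matching of `H`. -/
noncomputable def matchNum {α β γ : Type*} (H : Multiset (α × β × γ)) : ℕ :=
  sSup {k | ∃ M : Finset (α × β × γ), IsMatching H M ∧ M.card = k}

/-- The link of the first vertex class: the bipartite multigraph on the other two classes
obtained by deleting from each edge its vertex in the first class. -/
def linkA {α β γ : Type*} (H : Multiset (α × β × γ)) : Multiset (β × γ) :=
  H.map fun e => (e.2.1, e.2.2)

/-- The vertices `b, b', c, c'` span a connected component of the bipartite multigraph `G`
which is an `r`-regular `C₄`: a cycle of length 4 together with edges parallel to the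
edges of the cycle, such that every vertex has degree exactly `r`. -/
def IsRegC4Component {β γ : Type*} [DecidableEq β] [DecidableEq γ]
    (G : Multiset (β × γ)) (r : ℕ) (b b' : β) (c c' : γ) : Prop :=
  b ≠ b' ∧ c ≠ c' ∧
  ∃ k1 k2 k3 k4 : ℕ, 0 < k1 ∧ 0 < k2 ∧ 0 < k3 ∧ 0 < k4 ∧
    k1 + k2 = r ∧ k3 + k4 = r ∧ k1 + k3 = r ∧ k2 + k4 = r ∧
    G.filter (fun e => e.1 = b ∨ e.1 = b' ∨ e.2 = c ∨ e.2 = c')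
      = k1 • ({(b, c)} : Multiset (β × γ)) + k2 • {(b, c')} + k3 • {(b', c)} + k4 • {(b', c')}

/-!
A matching of `H` is a set of edges of `lk A` that is independent in the line graph of `lk A` and
uses each vertex of `A` at most once. By the deficiency form of the topological Hall theorem, one of
size `|A| - d` exists as soon as, for every `S ⊆ A`, the independence complex of the line graph of
the edges at `S` has `|S| - d` as a lower bound for its connectivity: every reduced cycle on faces
of fewer than `|S| - d` vertices is a boundary.

For a bipartite multigraph `G` of maximum degree at most `r`, the connectivity of this complex is at
least `((2r - 3) ν(G) + |E(G)| - c(G)) / (6r - 7)`, where `c(G)` is the number of components that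
are `r`-regular `C₄`s. The proof is by induction on `|E(G)|`: by a Mayer–Vietoris argument, deleting
an edge is harmless if removing it together with all edges meeting it costs at most one dimension.
Fix a maximum matching and a minimal nonempty set `Y` of left vertices with `|N(Y)| ≤ |Y|`. Some
star of edges at `Y` can be deleted profitably, unless `|Y| = 2` and `Y ∪ N(Y)` spans an `r`-regular
`C₄`; deleting that component lowers `c(G)` as well, which makes up for the loss of one edge.

Finally, the edges at `S ⊆ A` number at least `r |S|`, so by König they contain a matching of size
`|S|`, and their connectivity is at least `((3r - 3) |S| - c(lk A)) / (6r - 7)`.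
-/

section Development

open Finset

section Chains

variable {ι : Type*}

/-- Simplicial chains mod 2 on the full simplex with vertex set `ι`. The empty face is included, so
homology is reduced; chains are graded by the cardinality of faces, which is dimension plus one. -/
abbrev Chain (ι : Type*) := Finset ι →₀ ZMod 2

/-- The chain consisting of a single face. -/
noncomputable abbrev face (τ : Finset ι) : Chain ι := Finsupp.single τ 1

lemma chain_map_ext {M : Type*} [AddCommMonoid M] [Module (ZMod 2) M] {f g : Chain ι →ₗ[ZMod 2] M}
    (h : ∀ τ, f (face τ) = g (face τ)) : f = g :=
  Finsupp.lhom_ext' fun τ => LinearMap.ext_ring (h τ)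

variable [DecidableEq ι]

/-- The simplicial boundary operator. -/
noncomputable def boundary : Chain ι →ₗ[ZMod 2] Chain ι :=
  Finsupp.linearCombination (ZMod 2) fun τ => ∑ v ∈ τ, face (τ.erase v)

/-- Coning with apex `v`; faces through `v` are sent to zero. -/
noncomputable def cone (v : ι) : Chain ι →ₗ[ZMod 2] Chain ι :=
  Finsupp.linearCombination (ZMod 2) fun τ => if v ∈ τ then 0 else face (insert v τ)

/-- Contraction by the vertex `v`: the part of a chain through `v`, with `v` removed. -/
noncomputable def contract (v : ι) : Chain ι →ₗ[ZMod 2] Chain ι :=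
  Finsupp.linearCombination (ZMod 2) fun τ => if v ∈ τ then face (τ.erase v) else 0

@[simp] lemma boundary_face (τ : Finset ι) : boundary (face τ) = ∑ v ∈ τ, face (τ.erase v) := by
  simp [boundary]

lemma cone_face_of_mem {v : ι} {τ : Finset ι} (hv : v ∈ τ) : cone v (face τ) = 0 := by
  simp [cone, hv]

lemma cone_face_of_notMem {v : ι} {τ : Finset ι} (hv : v ∉ τ) :
    cone v (face τ) = face (insert v τ) := by
  simp [cone, hv]

lemma contract_face_of_mem {v : ι} {τ : Finset ι} (hv : v ∈ τ) :
    contract v (face τ) = face (τ.erase v) := by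
  simp [contract, hv]

lemma contract_face_of_notMem {v : ι} {τ : Finset ι} (hv : v ∉ τ) : contract v (face τ) = 0 := by
  simp [contract, hv]

lemma cone_contract_add_contract_cone (v : ι) (z : Chain ι) :
    cone v (contract v z) + contract v (cone v z) = z := by
  refine LinearMap.congr_fun (f := cone v ∘ₗ contract v + contract v ∘ₗ cone v)
    (g := LinearMap.id) (chain_map_ext fun τ => ?_) z
  by_cases hv : v ∈ τ
  · simp [cone_face_of_mem hv, contract_face_of_mem hv, cone_face_of_notMem (notMem_erase v τ),
      insert_erase hv]
  · simp [contract_face_of_notMem hv, cone_face_of_notMem hv,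
      contract_face_of_mem (mem_insert_self v τ), erase_insert hv]

lemma boundary_cone (v : ι) (z : Chain ι) : boundary (cone v z) = z + cone v (boundary z) := by
  refine LinearMap.congr_fun (f := boundary ∘ₗ cone v)
    (g := LinearMap.id + cone v ∘ₗ boundary) (chain_map_ext fun τ => ?_) z
  by_cases hv : v ∈ τ
  · have h_rest : ∑ w ∈ τ.erase v, cone v (face (τ.erase w)) = 0 := sum_eq_zero fun w hw =>
      cone_face_of_mem (mem_erase.2 ⟨(ne_of_mem_erase hw).symm, hv⟩)
    simp [cone_face_of_mem hv, ← add_sum_erase _ _ hv, h_rest,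
      cone_face_of_notMem (notMem_erase v τ), insert_erase hv, ZModModule.add_self]
  · have h_sum : ∑ w ∈ τ, cone v (face (τ.erase w)) = ∑ w ∈ τ, face ((insert v τ).erase w) :=
      sum_congr rfl fun w hw => by
        rw [cone_face_of_notMem fun h => hv (mem_of_mem_erase h),
          erase_insert_of_ne (ne_of_mem_of_not_mem hw hv).symm]
    simp [cone_face_of_notMem hv, sum_insert hv, erase_insert hv, h_sum]

lemma boundary_contract (v : ι) (z : Chain ι) :
    boundary (contract v z) = contract v (boundary z) := by
  refine LinearMap.congr_fun (f := boundary ∘ₗ contract v) (g := contract v ∘ₗ boundary)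
    (chain_map_ext fun τ => ?_) z
  by_cases hv : v ∈ τ
  · have h_sum : ∑ w ∈ τ.erase v, contract v (face (τ.erase w)) =
        ∑ w ∈ τ.erase v, face ((τ.erase v).erase w) := sum_congr rfl fun w hw => by
      rw [contract_face_of_mem (mem_erase.2 ⟨(ne_of_mem_erase hw).symm, hv⟩), erase_right_comm]
    simp [contract_face_of_mem hv, ← add_sum_erase _ _ hv, h_sum,
      contract_face_of_notMem (notMem_erase v τ)]
  · simp [contract_face_of_notMem hv, contract_face_of_notMem fun h => hv (mem_of_mem_erase h)]

lemma chain_map_ext_cone {M : Type*} [AddCommMonoid M] [Module (ZMod 2) M]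
    {f g : Chain ι →ₗ[ZMod 2] M} (h_empty : f (face ∅) = g (face ∅))
    (h_cone : ∀ v z, f z = g z → f (cone v z) = g (cone v z)) : f = g := by
  refine chain_map_ext fun τ => ?_
  induction τ using Finset.induction with
  | empty => exact h_empty
  | insert v τ hv ih => simpa only [cone_face_of_notMem hv] using h_cone v _ ih

lemma boundary_boundary (z : Chain ι) : boundary (boundary z) = 0 := by
  have h : boundary ∘ₗ boundary = (0 : Chain ι →ₗ[ZMod 2] Chain ι) := by
    refine chain_map_ext_cone (by simp) fun v z hz => ?_
    simp only [LinearMap.comp_apply, LinearMap.zero_apply] at hz ⊢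
    rw [boundary_cone, map_add, boundary_cone, hz, map_zero, add_zero, ZModModule.add_self]
  rw [← LinearMap.comp_apply, h, LinearMap.zero_apply]

end Chains

section ChainMap

variable {ι α : Type*} [DecidableEq α]

/-- The chain map induced by a map of vertices; faces on which it is not injective vanish. -/
noncomputable def chainMap (a : ι → α) : Chain ι →ₗ[ZMod 2] Chain α :=
  open Classical in
  Finsupp.linearCombination (ZMod 2) fun τ => if Set.InjOn a τ then face (τ.image a) else 0

lemma chainMap_face_of_injOn {a : ι → α} {τ : Finset ι} (ha : Set.InjOn a τ) :
    chainMap a (face τ) = face (τ.image a) := by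
  simp [chainMap, ha]

lemma chainMap_face_of_not_injOn {a : ι → α} {τ : Finset ι} (ha : ¬Set.InjOn a τ) :
    chainMap a (face τ) = 0 := by
  simp [chainMap, ha]

variable [DecidableEq ι]

lemma chainMap_cone (a : ι → α) (v : ι) (z : Chain ι) :
    chainMap a (cone v z) = cone (a v) (chainMap a z) := by
  refine LinearMap.congr_fun (f := chainMap a ∘ₗ cone v) (g := cone (a v) ∘ₗ chainMap a)
    (chain_map_ext fun τ => ?_) z
  simp only [LinearMap.comp_apply]
  by_cases hτ : Set.InjOn a τ
  · by_cases hv : v ∈ τ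
    · rw [cone_face_of_mem hv, map_zero, chainMap_face_of_injOn hτ,
        cone_face_of_mem (mem_image_of_mem a hv)]
    have h_iff : Set.InjOn a ↑(insert v τ) ↔ a v ∉ τ.image a := by
      rw [coe_insert, Set.injOn_insert (mod_cast hv), ← coe_image, mem_coe]
      exact and_iff_right hτ
    rw [cone_face_of_notMem hv, chainMap_face_of_injOn hτ]
    by_cases hav : a v ∈ τ.image a
    · rw [cone_face_of_mem hav, chainMap_face_of_not_injOn (mt h_iff.1 (not_not.2 hav))]
    · rw [cone_face_of_notMem hav, chainMap_face_of_injOn (h_iff.2 hav), image_insert]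
  · rw [chainMap_face_of_not_injOn hτ, map_zero]
    by_cases hv : v ∈ τ
    · rw [cone_face_of_mem hv, map_zero]
    · rw [cone_face_of_notMem hv, chainMap_face_of_not_injOn]
      exact fun h => hτ (h.mono (mod_cast subset_insert v τ))

lemma boundary_chainMap (a : ι → α) (z : Chain ι) :
    boundary (chainMap a z) = chainMap a (boundary z) := by
  refine LinearMap.congr_fun (f := boundary ∘ₗ chainMap a) (g := chainMap a ∘ₗ boundary)
    (chain_map_ext_cone (by simp [chainMap]) fun v z hz => ?_) z
  simp only [LinearMap.comp_apply] at hz ⊢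
  rw [chainMap_cone, boundary_cone, boundary_cone, map_add, chainMap_cone, hz]

end ChainMap

section IndependenceComplex

variable {ι : Type*} {G : SimpleGraph ι} {E : Finset ι} {j k : ℕ}

/-- The chains of the independence complex of the induced subgraph `G[E]` that are supported on
faces of cardinality `j`. -/
noncomputable def indepChains (G : SimpleGraph ι) (E : Finset ι) (j : ℕ) :
    Submodule (ZMod 2) (Chain ι) :=
  Finsupp.supported (ZMod 2) (ZMod 2) {τ | τ ⊆ E ∧ G.IsIndepSet τ ∧ #τ = j}

lemma face_mem_indepChains {τ : Finset ι} (hτE : τ ⊆ E) (hτ : G.IsIndepSet τ) (hj : #τ = j) :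
    face τ ∈ indepChains G E j :=
  Finsupp.single_mem_supported _ _ ⟨hτE, hτ, hj⟩

lemma map_mem_of_mem_indepChains {M : Type*} [AddCommMonoid M] [Module (ZMod 2) M]
    {f : Chain ι →ₗ[ZMod 2] M} {N : Submodule (ZMod 2) M} {z : Chain ι}
    (hf : ∀ τ ⊆ E, G.IsIndepSet τ → #τ = j → f (face τ) ∈ N) (hz : z ∈ indepChains G E j) :
    f z ∈ N := by
  rw [indepChains, Finsupp.supported_eq_span_single] at hz
  refine (Submodule.span_le (p := N.comap f)).2 ?_ hz
  rintro _ ⟨τ, ⟨hτE, hτ, hj⟩, rfl⟩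
  exact hf τ hτE hτ hj

lemma indepChains_mono {E' : Finset ι} (hE : E ⊆ E') (j : ℕ) :
    indepChains G E j ≤ indepChains G E' j :=
  Finsupp.supported_mono fun _ hτ => ⟨hτ.1.trans hE, hτ.2⟩

open Classical in
/-- The vertices of the link of `v` in the independence complex of `G[E]`. -/
noncomputable def indepLink (G : SimpleGraph ι) (E : Finset ι) (v : ι) : Finset ι :=
  {e ∈ E | e ≠ v ∧ ¬G.Adj v e}

lemma mem_indepLink {v e : ι} : e ∈ indepLink G E v ↔ e ∈ E ∧ e ≠ v ∧ ¬G.Adj v e := by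
  classical exact mem_filter

lemma indepLink_subset {v : ι} : indepLink G E v ⊆ E := fun _ he => (mem_indepLink.1 he).1

variable [DecidableEq ι]

lemma cone_mem_indepChains {L : Finset ι} {v : ι} {z : Chain ι} (hv : v ∈ E) (hLE : L ⊆ E)
    (hvL : ∀ e ∈ L, ¬G.Adj v e) (hz : z ∈ indepChains G L j) :
    cone v z ∈ indepChains G E (j + 1) := by
  refine map_mem_of_mem_indepChains (fun τ hτL hτ hj => ?_) hz
  by_cases hvτ : v ∈ τ
  · rw [cone_face_of_mem hvτ]
    exact zero_mem _
  rw [cone_face_of_notMem hvτ]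
  refine face_mem_indepChains (insert_subset hv (hτL.trans hLE)) ?_
    (by rw [card_insert_of_notMem hvτ, hj])
  rw [coe_insert]
  exact hτ.insert fun e he _ => ⟨hvL e (hτL he), fun h => hvL e (hτL he) h.symm⟩

lemma contract_mem_indepChains (v : ι) {z : Chain ι} (hz : z ∈ indepChains G E (j + 1)) :
    contract v z ∈ indepChains G (indepLink G E v) j := by
  refine map_mem_of_mem_indepChains (fun τ hτE hτ hj => ?_) hz
  by_cases hvτ : v ∈ τ
  · rw [contract_face_of_mem hvτ]
    refine face_mem_indepChains (fun e he => ?_)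
      (hτ.mono (mod_cast erase_subset v τ)) (by rw [card_erase_of_mem hvτ, hj, Nat.add_sub_cancel])
    obtain ⟨hev, he⟩ := mem_erase.1 he
    exact mem_indepLink.2 ⟨hτE he, hev, hτ hvτ he hev.symm⟩
  · rw [contract_face_of_notMem hvτ]
    exact zero_mem _

lemma contract_eq_zero (v : ι) {z : Chain ι} (hz : z ∈ indepChains G E 0) : contract v z = 0 := by
  refine (Submodule.mem_bot (ZMod 2)).1 (map_mem_of_mem_indepChains (fun τ _ _ hj => ?_) hz)
  rw [card_eq_zero.1 hj, contract_face_of_notMem (notMem_empty v)]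
  exact zero_mem _

lemma contract_cone_mem_indepChains (v : ι) {z : Chain ι} (hz : z ∈ indepChains G E j) :
    contract v (cone v z) ∈ indepChains G (E.erase v) j := by
  refine map_mem_of_mem_indepChains (f := contract v ∘ₗ cone v) (fun τ hτE hτ hj => ?_) hz
  rw [LinearMap.comp_apply]
  by_cases hvτ : v ∈ τ
  · rw [cone_face_of_mem hvτ, map_zero]
    exact zero_mem _
  · rw [cone_face_of_notMem hvτ, contract_face_of_mem (mem_insert_self v τ), erase_insert hvτ]
    exact face_mem_indepChains (subset_erase.2 ⟨hτE, hvτ⟩) hτ hj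

/-- The independence complex of `G[E]` has vanishing reduced mod 2 homology in all dimensions
below `k - 1`. -/
def IndepConnected (G : SimpleGraph ι) (k : ℕ) (E : Finset ι) : Prop :=
  ∀ j < k, ∀ z ∈ indepChains G E j, boundary z = 0 →
    ∃ w ∈ indepChains G E (j + 1), boundary w = z

namespace IndepConnected

lemma zero : IndepConnected G 0 E := fun _ hj => absurd hj (Nat.not_lt_zero _)

lemma mono {l : ℕ} (h : IndepConnected G k E) (hl : l ≤ k) : IndepConnected G l E :=
  fun j hj => h j (hj.trans_le hl)

lemma of_isolated {v : ι} (hv : v ∈ E) (h : ∀ e ∈ E, ¬G.Adj v e) (k : ℕ) :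
    IndepConnected G k E := fun j _ z hz hbz =>
  ⟨cone v z, cone_mem_indepChains hv Subset.rfl h hz, by
    rw [boundary_cone, hbz, map_zero, add_zero]⟩

lemma of_erase_of_indepLink {v : ι} (hv : v ∈ E) (h_erase : IndepConnected G (k + 1) (E.erase v))
    (h_link : IndepConnected G k (indepLink G E v)) : IndepConnected G (k + 1) E := by
  intro j hj z hz hbz
  have h_contract : boundary (contract v z) = 0 := by rw [boundary_contract, hbz, map_zero]
  obtain ⟨w, hw, hbw⟩ :
      ∃ w ∈ indepChains G (indepLink G E v) j, boundary w = contract v z := by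
    cases j with
    | zero => exact ⟨0, zero_mem _, by rw [map_zero, contract_eq_zero v hz]⟩
    | succ j => exact h_link j (by omega) _ (contract_mem_indepChains v hz) h_contract
  have h_split := cone_contract_add_contract_cone v z
  have h_cycle : boundary (contract v (cone v z) + w) = 0 := by
    rw [map_add, hbw, boundary_contract, boundary_cone, hbz, map_zero, add_zero,
      ZModModule.add_self]
  have h_link_erase : indepLink G E v ⊆ E.erase v := fun e he =>
    mem_erase.2 ⟨(mem_indepLink.1 he).2.1, indepLink_subset he⟩
  obtain ⟨y, hy, hby⟩ := h_erase j hj _ (add_mem (contract_cone_mem_indepChains v hz)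
    (indepChains_mono h_link_erase j hw)) h_cycle
  refine ⟨y + cone v w, add_mem (indepChains_mono (erase_subset v E) _ hy)
    (cone_mem_indepChains hv indepLink_subset (fun e he => (mem_indepLink.1 he).2.2) hw), ?_⟩
  rw [map_add, hby, boundary_cone, hbw, ZModModule.add_add_add_cancel, add_comm, h_split]

lemma of_sdiff_clique {F : Finset ι} (hFE : F ⊆ E) (hF : G.IsClique F)
    (h_sdiff : IndepConnected G (k + 1) (E \ F))
    (h_link : ∀ v ∈ F, IndepConnected G k (indepLink G E v)) : IndepConnected G (k + 1) E := by
  suffices h : ∀ D ⊆ F, IndepConnected G (k + 1) (E \ F ∪ D) by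
    simpa only [sdiff_union_of_subset hFE] using h F Subset.rfl
  intro D
  induction D using Finset.induction with
  | empty => exact fun _ => by rwa [union_empty]
  | insert v D hv ih =>
    intro hD
    obtain ⟨hvF, hDF⟩ := insert_subset_iff.1 hD
    refine of_erase_of_indepLink (v := v) (by simp) ?_ ?_
    · convert ih hDF using 1
      grind
    · convert h_link v hvF using 1
      ext e
      have h_adj : e ∈ F → e ≠ v → G.Adj v e := fun he hev => hF hvF he hev.symm
      simp only [mem_indepLink]
      grind

lemma of_disjoint_clique {F : Finset ι} (hFE : F ⊆ E) (hF : G.IsClique F) (hF_ne : F.Nonempty)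
    (hFG : ∀ v ∈ F, ∀ e ∈ E \ F, ¬G.Adj v e) (h : IndepConnected G k (E \ F)) :
    IndepConnected G (k + 1) E := by
  obtain ⟨v, hv⟩ := hF_ne
  refine of_sdiff_clique (F := F.erase v) ((erase_subset v F).trans hFE)
    (hF.subset (mod_cast erase_subset v F)) (of_isolated (v := v) ?_ ?_ _) fun w hw => ?_
  · simpa using hFE hv
  · intro e he
    by_cases hev : e = v
    · exact hev ▸ G.irrefl
    · exact hFG v hv e (by grind)
  · convert h using 1
    ext e
    have h_adj : e ∈ F → e ≠ w → G.Adj w e :=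
      fun he hew => hF (mem_of_mem_erase hw) he hew.symm
    have h_not_adj := hFG w (mem_of_mem_erase hw) e
    simp only [mem_indepLink]
    grind

end IndepConnected

end IndependenceComplex

section Transversals

variable {ι α : Type*} [DecidableEq α] {G : SimpleGraph ι} {V : Finset ι} {a : ι → α}

lemma eq_zero_of_boundary_eq_zero {σ : Finset α} (hσ : σ.Nonempty) {z : Chain α}
    (hz : z ∈ Submodule.span (ZMod 2) {face σ}) (hbz : boundary z = 0) : z = 0 := by
  obtain ⟨x, hx⟩ := hσ
  obtain ⟨c, rfl⟩ := Submodule.mem_span_singleton.1 hz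
  have h_cone : cone x (c • face σ) = 0 := by rw [map_smul, cone_face_of_mem hx, smul_zero]
  have h := boundary_cone x (c • face σ)
  rwa [h_cone, hbz, map_zero, map_zero, add_zero, eq_comm] at h

lemma image_eq_of_injOn {σ : Finset α} {τ : Finset ι} (hτσ : τ ⊆ {e ∈ V | a e ∈ σ})
    (hτ : Set.InjOn a τ) (h_card : #τ = #σ) : τ.image a = σ :=
  eq_of_subset_of_card_le (image_subset_iff.2 fun _ he => (mem_filter.1 (hτσ he)).2)
    (by rw [card_image_of_injOn hτ, h_card])

lemma chainMap_mem_span {σ : Finset α} {z : Chain ι}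
    (hz : z ∈ indepChains G {e ∈ V | a e ∈ σ} #σ) :
    chainMap a z ∈ Submodule.span (ZMod 2) {face σ} := by
  refine map_mem_of_mem_indepChains (fun τ hτσ _ h_card => ?_) hz
  by_cases hτ : Set.InjOn a τ
  · rw [chainMap_face_of_injOn hτ, image_eq_of_injOn hτσ hτ h_card]
    exact Submodule.mem_span_singleton_self _
  · rw [chainMap_face_of_not_injOn hτ]
    exact zero_mem _

variable [DecidableEq ι]

/-- `F` fills the faces of the simplex on the colours, up to cardinality `m`, with chains of
independent vertices: the face `σ` is filled using only vertices with colours in `σ`. -/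
structure IsFilling (G : SimpleGraph ι) (V : Finset ι) (a : ι → α) (m : ℕ)
    (F : Chain α →ₗ[ZMod 2] Chain ι) : Prop where
  map_empty : F (face ∅) = face ∅
  map_mem : ∀ σ, #σ ≤ m → F (face σ) ∈ indepChains G {e ∈ V | a e ∈ σ} #σ
  boundary_map : ∀ σ, #σ ≤ m → boundary (F (face σ)) = F (boundary (face σ))

lemma isFilling_zero (G : SimpleGraph ι) (V : Finset ι) (a : ι → α) :
    IsFilling G V a 0 (Finsupp.linearCombination (ZMod 2) fun _ => face ∅) := by
  refine ⟨by simp, fun σ hσ => ?_, fun σ hσ => ?_⟩ <;>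
    obtain rfl := card_eq_zero.1 (Nat.le_zero.1 hσ)
  · simpa using face_mem_indepChains (empty_subset _) (by simp) card_empty
  · simp

lemma IsFilling.boundary_map_boundary {m : ℕ} {F : Chain α →ₗ[ZMod 2] Chain ι}
    (hF : IsFilling G V a m F) {σ : Finset α} (hσ : #σ = m + 1) :
    boundary (F (boundary (face σ))) = 0 := by
  have h : ∀ x ∈ σ, boundary (F (face (σ.erase x))) =
      F (boundary (face (σ.erase x))) :=
    fun x hx => hF.boundary_map _ (by rw [card_erase_of_mem hx]; omega)
  rw [boundary_face, map_sum, map_sum, sum_congr rfl h, ← map_sum, ← map_sum, ← boundary_face,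
    boundary_boundary, map_zero]

lemma IsFilling.map_boundary_mem {m : ℕ} {F : Chain α →ₗ[ZMod 2] Chain ι}
    (hF : IsFilling G V a m F) {σ : Finset α} (hσ : #σ = m + 1) :
    F (boundary (face σ)) ∈ indepChains G {e ∈ V | a e ∈ σ} m := by
  rw [boundary_face, map_sum]
  refine sum_mem fun x hx => ?_
  have h_card : #(σ.erase x) = m := by rw [card_erase_of_mem hx, hσ, Nat.add_sub_cancel]
  have h_mem := hF.map_mem (σ.erase x) h_card.le
  rw [h_card] at h_mem
  exact indepChains_mono (monotone_filter_right V fun _ _ h => mem_of_mem_erase h) m h_mem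

lemma exists_isFilling (h : ∀ S : Finset α, IndepConnected G #S {e ∈ V | a e ∈ S}) (m : ℕ) :
    ∃ F, IsFilling G V a m F := by
  induction m with
  | zero => exact ⟨_, isFilling_zero G V a⟩
  | succ m ih =>
    obtain ⟨F, hF⟩ := ih
    have h_fill : ∀ σ : Finset α, #σ = m + 1 →
        ∃ w ∈ indepChains G {e ∈ V | a e ∈ σ} (m + 1), boundary w = F (boundary (face σ)) :=
      fun σ hσ => h σ m (by omega) _ (hF.map_boundary_mem hσ) (hF.boundary_map_boundary hσ)
    choose! w hw hbw using h_fill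
    let F' : Chain α →ₗ[ZMod 2] Chain ι :=
      Finsupp.linearCombination (ZMod 2) fun σ => if #σ = m + 1 then w σ else F (face σ)
    have hF'_of_le : ∀ σ, #σ ≤ m → F' (face σ) = F (face σ) := fun σ hσ => by
      simp [F', show #σ ≠ m + 1 by omega]
    have hF'_of_eq : ∀ σ, #σ = m + 1 → F' (face σ) = w σ := fun σ hσ => by simp [F', hσ]
    have hF'_boundary : ∀ σ, #σ ≤ m + 1 → F' (boundary (face σ)) = F (boundary (face σ)) :=
      fun σ hσ => by
        simp only [boundary_face, map_sum]
        exact sum_congr rfl fun x hx => hF'_of_le _ (by rw [card_erase_of_mem hx]; omega)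
    refine ⟨F', (hF'_of_le ∅ (by simp)).trans hF.map_empty, fun σ hσ => ?_, fun σ hσ => ?_⟩ <;>
      rcases hσ.lt_or_eq with hσ' | hσ'
    · exact hF'_of_le σ (by omega) ▸ hF.map_mem σ (by omega)
    · rw [hF'_of_eq σ hσ', hσ']
      exact hw σ hσ'
    · rw [hF'_boundary σ hσ, hF'_of_le σ (by omega), hF.boundary_map σ (by omega)]
    · rw [hF'_boundary σ hσ, hF'_of_eq σ hσ', hbw σ hσ']

lemma IsFilling.chainMap_face {m : ℕ} {F : Chain α →ₗ[ZMod 2] Chain ι}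
    (hF : IsFilling G V a m F) {σ : Finset α} (hσ : #σ ≤ m) :
    chainMap a (F (face σ)) = face σ := by
  induction σ using Finset.strongInduction with
  | H σ ih =>
    rcases σ.eq_empty_or_nonempty with rfl | hσ_ne
    · rw [hF.map_empty, chainMap_face_of_injOn (by simp), image_empty]
    have h_rest : ∀ x ∈ σ, chainMap a (F (face (σ.erase x))) = face (σ.erase x) := fun x hx =>
      ih _ (erase_ssubset hx) ((card_le_card (erase_subset x σ)).trans hσ)
    refine sub_eq_zero.1 (eq_zero_of_boundary_eq_zero hσ_ne
      (sub_mem (chainMap_mem_span (hF.map_mem σ hσ)) (Submodule.mem_span_singleton_self _)) ?_)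
    rw [map_sub, boundary_chainMap, hF.boundary_map σ hσ, boundary_face, map_sum, map_sum,
      sum_congr rfl h_rest, sub_self]

theorem exists_indepSet_image_eq
    (h : ∀ S : Finset α, IndepConnected G #S {e ∈ V | a e ∈ S}) (S : Finset α) :
    ∃ τ ⊆ V, G.IsIndepSet τ ∧ Set.InjOn a τ ∧ τ.image a = S := by
  obtain ⟨F, hF⟩ := exists_isFilling h #S
  by_contra! h_none
  have h_zero : chainMap a (F (face S)) = 0 := by
    refine (Submodule.mem_bot (ZMod 2)).1
      (map_mem_of_mem_indepChains (fun τ hτS hτ h_card => ?_) (hF.map_mem S le_rfl))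
    have hτ_not_injOn : ¬Set.InjOn a τ := fun h_inj =>
      h_none τ (hτS.trans (filter_subset _ V)) hτ h_inj (image_eq_of_injOn hτS h_inj h_card)
    rw [chainMap_face_of_not_injOn hτ_not_injOn]
    exact zero_mem _
  rw [hF.chainMap_face le_rfl] at h_zero
  exact one_ne_zero (Finsupp.single_eq_zero.1 h_zero)

end Transversals

section Deficiency

variable {ι κ α : Type*} {G : SimpleGraph ι} {E : Finset ι} {k : ℕ}

lemma chainMap_injective [DecidableEq κ] {g : ι → κ} (hg : Function.Injective g) :
    Function.Injective (chainMap g) := by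
  have h : chainMap g = Finsupp.lmapDomain (ZMod 2) (ZMod 2) (Finset.map ⟨g, hg⟩) :=
    chain_map_ext fun τ => by
      simp [chainMap_face_of_injOn hg.injOn, map_eq_image]
  rw [h]
  exact Finsupp.mapDomain_injective (map_injective _)

variable [DecidableEq ι]

lemma IndepConnected.map [DecidableEq κ] {G' : SimpleGraph κ} (h : IndepConnected G k E)
    (g : G ↪g G') : IndepConnected G' k (E.map g.toEmbedding) := by
  have h_face : ∀ τ ⊆ E, ∀ j, G.IsIndepSet τ → #τ = j →
      chainMap g (face τ) ∈ indepChains G' (E.map g.toEmbedding) j := fun τ hτE j hτ hj => by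
    rw [chainMap_face_of_injOn g.injective.injOn]
    refine face_mem_indepChains ?_ ?_ (by rw [card_image_of_injective _ g.injective, hj])
    · rw [map_eq_image]
      exact image_subset_image hτE
    · rw [coe_image]
      rintro _ ⟨e, he, rfl⟩ _ ⟨f, hf, rfl⟩ hef
      exact fun h_adj => hτ he hf (ne_of_apply_ne g hef) (g.map_adj_iff.1 h_adj)
  have h_lift : ∀ j, ∀ z ∈ indepChains G' (E.map g.toEmbedding) j,
      z ∈ (indepChains G E j).map (chainMap g) := fun j z hz => by
    refine map_mem_of_mem_indepChains (f := LinearMap.id) (fun τ hτE hτ hj => ?_) hz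
    obtain ⟨σ, hσE, rfl⟩ := subset_map_iff.1 hτE
    refine ⟨face σ, face_mem_indepChains hσE (fun e he f hf hef h_adj => ?_) (by simpa using hj),
      ?_⟩
    · exact hτ (mem_coe.2 (mem_map_of_mem _ he)) (mem_coe.2 (mem_map_of_mem _ hf))
        (g.injective.ne hef) (g.map_adj_iff.2 h_adj)
    · rw [chainMap_face_of_injOn g.injective.injOn, map_eq_image]
      rfl
  intro j hj z hz hbz
  obtain ⟨z, hz', rfl⟩ := h_lift j z hz
  rw [boundary_chainMap, (map_eq_zero_iff _ (chainMap_injective g.injective))] at hbz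
  obtain ⟨w, hw, rfl⟩ := h j hj z hz' hbz
  exact ⟨chainMap g w, map_mem_of_mem_indepChains (fun τ hτE hτ hj => h_face τ hτE _ hτ hj) hw,
    boundary_chainMap g w⟩

lemma IndepConnected.disjSum_product [DecidableEq α] [DecidableEq κ] {S : Finset α}
    (h : IndepConnected G k E) (hS : S.Nonempty) (T : Finset κ) :
    IndepConnected (G ⊕g ((⊤ : SimpleGraph α) □ (⊥ : SimpleGraph κ))) (k + #T)
      (E.disjSum (S ×ˢ T)) := by
  induction T using Finset.induction with
  | empty =>
    rw [product_empty, disjSum_empty, card_empty, add_zero]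
    exact h.map SimpleGraph.Embedding.sumInl
  | insert i T hi ih =>
    have h_sdiff : E.disjSum (S ×ˢ insert i T) \ (∅ : Finset ι).disjSum (S ×ˢ {i}) =
        E.disjSum (S ×ˢ T) := by
      ext (e | ⟨x, j⟩)
      · simp
      · simp only [mem_sdiff, inr_mem_disjSum, mem_product, mem_insert, mem_singleton]
        grind
    rw [card_insert_of_notMem hi, ← add_assoc]
    refine IndepConnected.of_disjoint_clique (F := (∅ : Finset ι).disjSum (S ×ˢ {i}))
      (disjSum_mono (empty_subset E) (product_subset_product_right (by simp))) ?_ ?_ ?_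
      (h_sdiff ▸ ih)
    · rintro (e | ⟨x, j⟩) hx (f | ⟨y, l⟩) hy hxy <;> simp_all
    · obtain ⟨x, hx⟩ := hS
      exact ⟨.inr (x, i), by simpa using hx⟩
    · rw [h_sdiff]
      rintro (e | ⟨x, j⟩) hx (f | ⟨y, l⟩) hy <;>
        simp only [inl_mem_disjSum, inr_mem_disjSum, notMem_empty, mem_product,
          mem_singleton] at hx hy
      · simp
      · rw [SimpleGraph.sum_adj_inr, SimpleGraph.boxProd_adj, SimpleGraph.bot_adj]
        grind

theorem exists_indepSet_card_le [Fintype α] [DecidableEq α] {V : Finset ι} {a : ι → α} {d : ℕ}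
    (h : ∀ S : Finset α, IndepConnected G (#S - d) {e ∈ V | a e ∈ S}) :
    ∃ τ ⊆ V, G.IsIndepSet τ ∧ Set.InjOn a τ ∧ Fintype.card α ≤ #τ + d := by
  let V' : Finset (ι ⊕ α × Fin d) := V.disjSum univ
  let a' : ι ⊕ α × Fin d → α := Sum.elim a Prod.fst
  have h_colours : ∀ S : Finset α,
      {e ∈ V' | a' e ∈ S} = disjSum {e ∈ V | a e ∈ S} (S ×ˢ (univ : Finset (Fin d))) := fun S => by
    ext (e | ⟨x, i⟩) <;> simp [V', a']
  obtain ⟨τ, hτV, hτ, hτ_inj, hτ_image⟩ := exists_indepSet_image_eq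
    (G := G ⊕g ((⊤ : SimpleGraph α) □ (⊥ : SimpleGraph (Fin d)))) (V := V') (a := a')
    (fun S => by
      rcases S.eq_empty_or_nonempty with rfl | hS
      · exact IndepConnected.zero
      · rw [h_colours S]
        exact ((h S).disjSum_product hS univ).mono (by rw [card_univ, Fintype.card_fin]; omega))
    univ
  refine ⟨τ.toLeft, fun e he => ?_, fun e he f hf hef h_adj => ?_, fun e he f hf hef => ?_, ?_⟩
  · exact inl_mem_disjSum.1 (hτV (mem_toLeft.1 he))
  · exact hτ (mem_toLeft.1 he) (mem_toLeft.1 hf) (Sum.inl_injective.ne hef) h_adj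
  · exact Sum.inl_injective (hτ_inj (mem_toLeft.1 he) (mem_toLeft.1 hf) hef)
  have h_right : #τ.toRight ≤ d := by
    refine (card_le_card_of_injOn Prod.snd (fun _ _ => mem_univ _) ?_).trans_eq
      (by rw [card_univ, Fintype.card_fin])
    rintro ⟨x, i⟩ hx ⟨y, l⟩ hy (rfl : i = l)
    by_contra hxy
    refine hτ (mem_toRight.1 hx) (mem_toRight.1 hy) (Sum.inr_injective.ne hxy) ?_
    exact Or.inl ⟨fun h_eq => hxy (Prod.ext h_eq rfl), rfl⟩
  calc Fintype.card α = #(τ.image a') := by rw [hτ_image, card_univ]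
    _ ≤ #τ := card_image_le
    _ = #τ.toLeft + #τ.toRight := card_toLeft_add_card_toRight.symm
    _ ≤ #τ.toLeft + d := by gcongr

end Deficiency

section BipartiteMultigraph

variable {ι β γ : Type*} {p : ι → β} {q : ι → γ} {E F M N : Finset ι}

/-- The line graph of the bipartite multigraph whose edge `e` has the ends `p e` and `q e`. -/
def lineGraph (p : ι → β) (q : ι → γ) : SimpleGraph ι where
  Adj e f := e ≠ f ∧ (p e = p f ∨ q e = q f)
  symm := ⟨fun _ _ h => ⟨h.1.symm, h.2.imp Eq.symm Eq.symm⟩⟩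

lemma lineGraph_swap (p : ι → β) (q : ι → γ) : lineGraph q p = lineGraph p q := by
  ext e f
  exact and_congr_right fun _ => or_comm

/-- A set of edges no two of which share an end. -/
structure IsEdgeMatching (p : ι → β) (q : ι → γ) (M : Finset ι) : Prop where
  left : Set.InjOn p M
  right : Set.InjOn q M

lemma IsEdgeMatching.mono (h : IsEdgeMatching p q M) (hN : N ⊆ M) : IsEdgeMatching p q N :=
  ⟨h.left.mono (mod_cast hN), h.right.mono (mod_cast hN)⟩

lemma isEdgeMatching_of_isIndepSet (h : (lineGraph p q).IsIndepSet M) : IsEdgeMatching p q M :=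
  ⟨fun _ he _ hf hef => by_contra fun hne => h he hf hne ⟨hne, .inl hef⟩,
    fun _ he _ hf hef => by_contra fun hne => h he hf hne ⟨hne, .inr hef⟩⟩

lemma IsEdgeMatching.union [DecidableEq ι] (hM : IsEdgeMatching p q M) (hN : IsEdgeMatching p q N)
    (hp : ∀ e ∈ M, ∀ f ∈ N, p e ≠ p f) (hq : ∀ e ∈ M, ∀ f ∈ N, q e ≠ q f) :
    IsEdgeMatching p q (M ∪ N) := by
  have h_disj : Disjoint (M : Set ι) N :=
    Set.disjoint_left.2 fun e he hf => hp e he e hf rfl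
  constructor <;> rw [coe_union, Set.injOn_union h_disj]
  · exact ⟨hM.left, hN.left, hp⟩
  · exact ⟨hM.right, hN.right, hq⟩

lemma IsEdgeMatching.insert [DecidableEq ι] {e : ι} (hM : IsEdgeMatching p q M)
    (hp : ∀ f ∈ M, p f ≠ p e) (hq : ∀ f ∈ M, q f ≠ q e) : IsEdgeMatching p q (insert e M) := by
  rw [insert_eq, union_comm]
  exact hM.union ⟨by simp, by simp⟩ (by simpa using hp) (by simpa using hq)

variable [DecidableEq β] [DecidableEq γ] {S : Finset β} {T : Finset γ} {r : ℕ}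

/-- Every vertex on the side of the end map `p` has degree at most `r` in `E`. -/
def DegLE (p : ι → β) (r : ℕ) (E : Finset ι) : Prop := ∀ b, #{e ∈ E | p e = b} ≤ r

lemma DegLE.mono (h : DegLE p r E) (hF : F ⊆ E) : DegLE p r F :=
  fun b => (card_le_card (filter_subset_filter _ hF)).trans (h b)

lemma DegLE.card_filter_mem_le (h : DegLE p r E) (S : Finset β) : #{e ∈ E | p e ∈ S} ≤ r * #S :=
  card_le_mul_card_image_of_maps_to (fun _ he => (mem_filter.1 he).2) r fun b _ =>
    (card_le_card (filter_subset_filter _ (filter_subset _ _))).trans (h b)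

lemma degLE_one_of_injOn (h : Set.InjOn p M) : DegLE p 1 M := fun b =>
  card_le_one.2 fun e he f hf => by
    obtain ⟨he, heb⟩ := mem_filter.1 he
    obtain ⟨hf, hfb⟩ := mem_filter.1 hf
    exact h he hf (heb.trans hfb.symm)

/-- The edges of `E` that remain after the vertices in `S` and `T` are deleted. -/
def deleteVerts (p : ι → β) (q : ι → γ) (E : Finset ι) (S : Finset β) (T : Finset γ) : Finset ι :=
  {e ∈ E | p e ∉ S ∧ q e ∉ T}

lemma mem_deleteVerts {e : ι} : e ∈ deleteVerts p q E S T ↔ e ∈ E ∧ p e ∉ S ∧ q e ∉ T := mem_filter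

lemma deleteVerts_subset : deleteVerts p q E S T ⊆ E := filter_subset _ _

lemma deleteVerts_mono (hF : F ⊆ E) : deleteVerts p q F S T ⊆ deleteVerts p q E S T :=
  filter_subset_filter _ hF

lemma deleteVerts_swap (p : ι → β) (q : ι → γ) (E : Finset ι) (S : Finset β) (T : Finset γ) :
    deleteVerts q p E T S = deleteVerts p q E S T :=
  filter_congr fun _ _ => and_comm

lemma indepLink_lineGraph (p : ι → β) (q : ι → γ) (E : Finset ι) (e : ι) :
    indepLink (lineGraph p q) E e = deleteVerts p q E {p e} {q e} := by
  ext f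
  simp only [mem_indepLink, mem_deleteVerts, lineGraph, mem_singleton]
  grind

lemma deleteVerts_deleteVerts (p : ι → β) (q : ι → γ) (E : Finset ι) (S S' : Finset β)
    (T T' : Finset γ) :
    deleteVerts p q (deleteVerts p q E S T) S' T' = deleteVerts p q E (S ∪ S') (T ∪ T') := by
  ext e
  simp only [mem_deleteVerts, mem_union]
  tauto

lemma card_add_card_le_card_deleteVerts (hp : DegLE p r E) (hq : DegLE q r E) {I : Finset ι}
    (hI : ∀ e ∈ I, e ∈ E ∧ p e ∈ S ∧ q e ∈ T) :
    #E + #I ≤ #(deleteVerts p q E S T) + r * (#S + #T) := by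
  classical
  have h_inter : #I ≤ #({e ∈ E | p e ∈ S} ∩ {e ∈ E | q e ∈ T}) :=
    card_le_card fun e he => by simpa [(hI e he).1] using (hI e he).2
  have h_union : #E ≤ #(deleteVerts p q E S T) + #({e ∈ E | p e ∈ S} ∪ {e ∈ E | q e ∈ T}) := by
    refine (card_le_card fun e he => ?_).trans (card_union_le _ _)
    simp only [mem_union, mem_deleteVerts, mem_filter]
    tauto
  have h_incl_excl := card_union_add_card_inter {e ∈ E | p e ∈ S} {e ∈ E | q e ∈ T}
  have h_left := hp.card_filter_mem_le S
  have h_right := hq.card_filter_mem_le T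
  rw [mul_add]
  omega

lemma IsEdgeMatching.card_le_card_deleteVerts (h : IsEdgeMatching p q M) (S : Finset β)
    (T : Finset γ) : #M ≤ #(deleteVerts p q M S T) + (#S + #T) := by
  simpa using card_add_card_le_card_deleteVerts (S := S) (T := T) (I := ∅)
    (degLE_one_of_injOn h.left) (degLE_one_of_injOn h.right) (by simp)

variable [DecidableEq ι] {k : ℕ}

lemma IndepConnected.of_sdiff_left (hFE : F ⊆ E) {b : β} (hF : ∀ f ∈ F, p f = b)
    (h_sdiff : IndepConnected (lineGraph p q) (k + 1) (E \ F))
    (h : ∀ f ∈ F, IndepConnected (lineGraph p q) k (deleteVerts p q E {p f} {q f})) :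
    IndepConnected (lineGraph p q) (k + 1) E :=
  .of_sdiff_clique hFE (fun e he f hf hef => ⟨hef, .inl ((hF e he).trans (hF f hf).symm)⟩) h_sdiff
    fun f hf => by simpa only [indepLink_lineGraph] using h f hf

lemma IndepConnected.of_sdiff_right (hFE : F ⊆ E) {c : γ} (hF : ∀ f ∈ F, q f = c)
    (h_sdiff : IndepConnected (lineGraph p q) (k + 1) (E \ F))
    (h : ∀ f ∈ F, IndepConnected (lineGraph p q) k (deleteVerts p q E {p f} {q f})) :
    IndepConnected (lineGraph p q) (k + 1) E :=
  .of_sdiff_clique hFE (fun e he f hf hef => ⟨hef, .inr ((hF e he).trans (hF f hf).symm)⟩) h_sdiff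
    fun f hf => by simpa only [indepLink_lineGraph] using h f hf

/-- The edges of the star at `q e₀` that are exploded first: all except `e₀` and the late ones,
which lead to the vertex `b`. -/
def starEdges (p : ι → β) (q : ι → γ) (E : Finset ι) (e₀ : ι) (b : β) : Finset ι :=
  {f ∈ E | q f = q e₀ ∧ f ≠ e₀ ∧ p f ≠ b}

lemma mem_starEdges {e₀ f : ι} {b : β} :
    f ∈ starEdges p q E e₀ b ↔ f ∈ E ∧ q f = q e₀ ∧ f ≠ e₀ ∧ p f ≠ b := mem_filter

lemma starEdges_subset {e₀ : ι} {b : β} : starEdges p q E e₀ b ⊆ E := filter_subset _ _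

lemma card_starEdges_le {ρ : ℕ} (hq : DegLE q (ρ + 2) E) {e₀ e₁ : ι} (he₀ : e₀ ∈ E) (he₁ : e₁ ∈ E)
    (hne : e₁ ≠ e₀) (hq₁ : q e₁ = q e₀) : #(starEdges p q E e₀ (p e₁)) ≤ ρ := by
  have h_subset : insert e₀ (insert e₁ (starEdges p q E e₀ (p e₁))) ⊆ {f ∈ E | q f = q e₀} := by
    refine insert_subset (by simp [he₀]) (insert_subset (by simp [he₁, hq₁]) fun f hf => ?_)
    exact mem_filter.2 ⟨(mem_starEdges.1 hf).1, (mem_starEdges.1 hf).2.1⟩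
  have h_card := (card_le_card h_subset).trans (hq _)
  rw [card_insert_of_notMem (by simp [mem_starEdges, hne.symm]),
    card_insert_of_notMem (by simp [mem_starEdges])] at h_card
  omega

-- After the star come the other edges at `p e₀`, then the late edges; this leaves `e₀` isolated.
lemma IndepConnected.of_star_right {e₀ : ι} (he₀ : e₀ ∈ E) (b : β)
    (h_star : ∀ f ∈ starEdges p q E e₀ b,
      IndepConnected (lineGraph p q) k (deleteVerts p q E {p f} {q f}))
    (h_left : ∀ f ∈ E, p f = p e₀ → q f ≠ q e₀ → IndepConnected (lineGraph p q) k
      (deleteVerts p q (E \ starEdges p q E e₀ b) {p f} {q f}))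
    (h_late : IndepConnected (lineGraph p q) k (deleteVerts p q E {p e₀, b} {q e₀})) :
    IndepConnected (lineGraph p q) (k + 1) E := by
  set F := starEdges p q E e₀ b
  have h_mem : ∀ f, f ∈ F ↔ f ∈ E ∧ q f = q e₀ ∧ f ≠ e₀ ∧ p f ≠ b := fun _ => mem_starEdges
  refine of_sdiff_right (F := F) starEdges_subset (c := q e₀) (by grind) ?_ h_star
  set A := {f ∈ E \ F | p f = p e₀ ∧ q f ≠ q e₀}
  refine of_sdiff_left (F := A) (filter_subset _ _) (b := p e₀) (by grind) ?_
    fun f hf => h_left f (by grind) (by grind) (by grind)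
  set B := {f ∈ (E \ F) \ A | q f = q e₀ ∧ f ≠ e₀}
  refine of_sdiff_right (F := B) (filter_subset _ _) (c := q e₀) (by grind) ?_ fun f hf => ?_
  · refine of_isolated (v := e₀) (by grind) (fun e he => ?_) _
    simp only [lineGraph]
    grind
  · convert h_late using 1
    ext e
    simp only [mem_deleteVerts, mem_singleton, mem_insert]
    grind

lemma IndepConnected.of_star_left {e₀ : ι} (he₀ : e₀ ∈ E) (c : γ)
    (h_star : ∀ f ∈ starEdges q p E e₀ c,
      IndepConnected (lineGraph p q) k (deleteVerts p q E {p f} {q f}))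
    (h_right : ∀ f ∈ E, q f = q e₀ → p f ≠ p e₀ → IndepConnected (lineGraph p q) k
      (deleteVerts p q (E \ starEdges q p E e₀ c) {p f} {q f}))
    (h_late : IndepConnected (lineGraph p q) k (deleteVerts p q E {p e₀} {q e₀, c})) :
    IndepConnected (lineGraph p q) (k + 1) E := by
  rw [← lineGraph_swap] at *
  simp only [← deleteVerts_swap p q] at *
  exact of_star_right he₀ c h_star h_right h_late

end BipartiteMultigraph

section Reducible

variable {ι β γ : Type*} [DecidableEq ι] [DecidableEq β] [DecidableEq γ] {p : ι → β} {q : ι → γ}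
  {ρ k a j : ℕ} {E F M N : Finset ι} {S : Finset β} {T : Finset γ}

/-- `M` is a maximum matching of the multigraph `E` of maximum degree at most `ρ + 2`, and the
connectivity bound is known for the proper subgraphs of `E`: a subgraph that has lost `a` from the
matching number and `w` edges is only `j` below the target `k + 1` if
`(2 * ρ + 1) * a + w ≤ j * (6 * ρ + 5)`. -/
structure Reducible (p : ι → β) (q : ι → γ) (ρ : ℕ) (E M : Finset ι) (k : ℕ) : Prop where
  degLE_left : DegLE p (ρ + 2) E
  degLE_right : DegLE q (ρ + 2) E
  matching : IsEdgeMatching p q M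
  subset : M ⊆ E
  card_le : ∀ N ⊆ E, IsEdgeMatching p q N → #N ≤ #M
  indepConnected : ∀ E' ⊂ E, ∀ N ⊆ E', IsEdgeMatching p q N → ∀ a w j, #M ≤ #N + a →
    #E ≤ #E' + w → (2 * ρ + 1) * a + w ≤ j * (6 * ρ + 5) →
      IndepConnected (lineGraph p q) (k + 1 - j) E'

namespace Reducible

lemma indepConnected_deleteVerts_sdiff (h : Reducible p q ρ E M k) {I : Finset ι}
    (hI : I.Nonempty) (hIE : ∀ e ∈ I, e ∈ E \ F ∧ p e ∈ S ∧ q e ∈ T)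
    (hN : N ⊆ deleteVerts p q (E \ F) S T) (hN' : IsEdgeMatching p q N) (ha : #M ≤ #N + a)
    (h_loss : (2 * ρ + 1) * a + #F + (ρ + 2) * (#S + #T) ≤ j * (6 * ρ + 5) + #I) :
    IndepConnected (lineGraph p q) (k + 1 - j) (deleteVerts p q (E \ F) S T) := by
  obtain ⟨e, he⟩ := hI
  have h_ssubset : deleteVerts p q (E \ F) S T ⊂ E :=
    (ssubset_iff_of_subset (deleteVerts_subset.trans sdiff_subset)).2
      ⟨e, (mem_sdiff.1 (hIE e he).1).1, fun h_mem => (mem_deleteVerts.1 h_mem).2.1 (hIE e he).2.1⟩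
  have h_card := card_add_card_le_card_deleteVerts (h.degLE_left.mono sdiff_subset)
    (h.degLE_right.mono sdiff_subset) hIE
  have h_sdiff := le_card_sdiff F E
  have h_lt := card_lt_card h_ssubset
  exact h.indepConnected _ h_ssubset N hN hN' a (#E - #(deleteVerts p q (E \ F) S T)) j ha
    (by omega) (by omega)

lemma indepConnected_deleteVerts (h : Reducible p q ρ E M k) {I : Finset ι} (hI : I.Nonempty)
    (hIE : ∀ e ∈ I, e ∈ E ∧ p e ∈ S ∧ q e ∈ T) (hN : N ⊆ deleteVerts p q E S T)
    (hN' : IsEdgeMatching p q N) (ha : #M ≤ #N + a)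
    (h_loss : (2 * ρ + 1) * a + (ρ + 2) * (#S + #T) ≤ j * (6 * ρ + 5) + #I) :
    IndepConnected (lineGraph p q) (k + 1 - j) (deleteVerts p q E S T) := by
  have h_sdiff := h.indepConnected_deleteVerts_sdiff (F := ∅) (S := S) (T := T) (j := j) hI
    (by simpa using hIE) (by simpa using hN) hN' ha (by simpa using h_loss)
  rwa [sdiff_empty] at h_sdiff

lemma indepConnected_link (h : Reducible p q ρ E M k) {f : ι} (hf : f ∈ E) :
    IndepConnected (lineGraph p q) k (deleteVerts p q E {p f} {q f}) := by
  have h_card := h.matching.card_le_card_deleteVerts {p f} {q f}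
  exact h.indepConnected_deleteVerts (I := {f}) (j := 1) (singleton_nonempty f) (by simpa using hf)
    (deleteVerts_mono h.subset) (h.matching.mono deleteVerts_subset) (a := 2) h_card
    (by simp only [card_singleton]; omega)

lemma indepConnected_of_forall_ne (h : Reducible p q ρ E M k) {e : ι} (he : e ∈ E)
    (heM : ∀ m ∈ M, q m ≠ q e) : IndepConnected (lineGraph p q) (k + 1) E := by
  obtain ⟨m, hm, hme⟩ : ∃ m ∈ M, p m = p e := by
    by_contra! h_left
    have h_card := h.card_le (insert e M) (insert_subset he h.subset)
      (h.matching.insert h_left heM)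
    rw [card_insert_of_notMem fun heM' => heM e heM' rfl] at h_card
    omega
  have hmE := h.subset hm
  have hne : m ≠ e := ne_of_apply_ne q (heM m hm)
  have h_star := card_starEdges_le (p := q) h.degLE_left he hmE hne hme
  refine .of_star_left he (q m) (fun f hf => h.indepConnected_link (mem_starEdges.1 hf).1)
    (fun f hf hqf hpf => ?_) ?_
  · have h_card := h.matching.card_le_card_deleteVerts {p f} (∅ : Finset γ)
    refine h.indepConnected_deleteVerts_sdiff (I := {f}) (N := deleteVerts p q M {p f} ∅) (a := 1)
      (j := 1) (singleton_nonempty f) ?_ ?_ (h.matching.mono deleteVerts_subset) h_card ?_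
    · simp only [mem_singleton, forall_eq, mem_sdiff, mem_starEdges]
      grind
    · intro g hg
      simp only [mem_deleteVerts, mem_sdiff, mem_starEdges, mem_singleton] at hg ⊢
      have := h.matching.left (mem_coe.2 hm) (mem_coe.2 hg.1)
      grind [h.subset hg.1]
    · simp only [card_singleton]
      omega
  · have h_card : #M ≤ #(M.erase m) + 1 := (card_erase_add_one hm).ge
    refine h.indepConnected_deleteVerts (I := {e, m}) (N := M.erase m) (j := 1) (by simp)
      (by grind) (fun g hg => ?_) (h.matching.mono (erase_subset _ _)) h_card ?_
    · have h_left := h.matching.left (mem_coe.2 hm) (mem_coe.2 (mem_of_mem_erase hg))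
      have h_right := h.matching.right (mem_coe.2 hm) (mem_coe.2 (mem_of_mem_erase hg))
      simp only [mem_deleteVerts, mem_insert, mem_singleton]
      grind [h.subset (mem_of_mem_erase hg)]
    · rw [card_pair hne.symm, card_pair (heM m hm).symm, card_singleton]
      omega

end Reducible
end Reducible

section Neighborhood

variable {ι β γ : Type*} [DecidableEq β] [DecidableEq γ] {p : ι → β} {q : ι → γ} {E : Finset ι}
  {Q Q' : Finset β} {b : β} {c : γ} {r : ℕ}

/-- The set of right ends of the edges of `E` whose left end lies in `Q`. -/
def nbhd (p : ι → β) (q : ι → γ) (E : Finset ι) (Q : Finset β) : Finset γ :=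
  image q {e ∈ E | p e ∈ Q}

lemma mem_nbhd : c ∈ nbhd p q E Q ↔ ∃ e ∈ E, p e ∈ Q ∧ q e = c := by
  simp only [nbhd, mem_image, mem_filter, and_assoc]

lemma mem_nbhd_singleton : c ∈ nbhd p q E {b} ↔ ∃ e ∈ E, p e = b ∧ q e = c := by
  simp only [mem_nbhd, mem_singleton]

lemma mem_nbhd_of_mem {e : ι} (he : e ∈ E) (hQ : p e ∈ Q) : q e ∈ nbhd p q E Q :=
  mem_nbhd.2 ⟨e, he, hQ, rfl⟩

lemma nbhd_mono (h : Q ⊆ Q') : nbhd p q E Q ⊆ nbhd p q E Q' :=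
  image_subset_image fun _ he => by simp only [mem_filter] at he ⊢; exact ⟨he.1, h he.2⟩

lemma nbhd_union (p : ι → β) (q : ι → γ) (E : Finset ι) (Q Q' : Finset β) :
    nbhd p q E (Q ∪ Q') = nbhd p q E Q ∪ nbhd p q E Q' := by
  ext c
  simp only [mem_nbhd, mem_union]
  grind

lemma card_nbhd_union_add_card_inter (p : ι → β) (q : ι → γ) (E : Finset ι) (Q Q' : Finset β) :
    #(nbhd p q E (Q ∪ Q')) + #(nbhd p q E Q ∩ nbhd p q E Q') =
      #(nbhd p q E Q) + #(nbhd p q E Q') := by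
  rw [nbhd_union, card_union_add_card_inter]

end Neighborhood

section RegularC4

variable {ι β γ : Type*} [DecidableEq β] [DecidableEq γ] {p : ι → β} {q : ι → γ}
  {r : ℕ} {E : Finset ι} {X : Finset β} {Z : Finset γ}

/-- The vertices in `X` and `Z` span a connected component of the bipartite multigraph `E` that is
an `r`-regular `C₄`. -/
structure IsRegularC4 (p : ι → β) (q : ι → γ) (r : ℕ) (E : Finset ι) (X : Finset β)
    (Z : Finset γ) : Prop where
  card_left : #X = 2
  card_right : #Z = 2
  mem_iff : ∀ e ∈ E, p e ∈ X ↔ q e ∈ Z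
  exists_edge : ∀ x ∈ X, ∀ z ∈ Z, ∃ e ∈ E, p e = x ∧ q e = z
  degree_left : ∀ x ∈ X, #{e ∈ E | p e = x} = r
  degree_right : ∀ z ∈ Z, #{e ∈ E | q e = z} = r

lemma DegLE.card_filter_eq_of_le (hp : DegLE p r E) (h : r * #X ≤ #{e ∈ E | p e ∈ X}) :
    ∀ x ∈ X, #{e ∈ E | p e = x} = r := by
  classical
  intro x hx
  have h_erase := hp.card_filter_mem_le (X.erase x)
  have h_split : #{e ∈ E | p e ∈ X} ≤ #{e ∈ E | p e ∈ X.erase x} + #{e ∈ E | p e = x} := by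
    refine (card_le_card fun e he => ?_).trans (card_union_le _ _)
    grind
  rw [← card_erase_add_one hx, mul_add] at h
  have h_le := hp x
  omega

lemma isRegularC4_of_card_le (hp : DegLE p r E) (hq : DegLE q r E) (hX : #X = 2)
    (hZ : #(nbhd p q E X) = 2)
    (h_edge : ∀ x ∈ X, ∀ z ∈ nbhd p q E X, ∃ e ∈ E, p e = x ∧ q e = z)
    (h : ∀ z ∈ nbhd p q E X, #(deleteVerts p q E X {z}) + r * 2 ≤ #E) :
    IsRegularC4 p q r E X (nbhd p q E X) := by
  set Z := nbhd p q E X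
  have h_right : #{e ∈ E | q e ∈ Z} ≤ r * 2 := hZ ▸ hq.card_filter_mem_le Z
  have h_eq : ∀ z ∈ Z, {e ∈ E | p e ∈ X ∨ q e = z} = {e ∈ E | q e ∈ Z} := by
    intro z hz
    refine eq_of_subset_of_card_le (fun e he => ?_) (h_right.trans ?_)
    · have := mem_nbhd_of_mem (p := p) (q := q) (Q := X) (mem_filter.1 he).1
      grind
    · have h_compl := card_filter_add_card_filter_not (s := E) fun e => p e ∈ X ∨ q e = z
      have h_del : deleteVerts p q E X {z} = {e ∈ E | ¬(p e ∈ X ∨ q e = z)} := by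
        ext e
        simp only [mem_deleteVerts, mem_filter, mem_singleton, not_or]
      have := h z hz
      rw [h_del] at this
      omega
  have h_mem : ∀ e ∈ E, p e ∈ X ↔ q e ∈ Z := by
    refine fun e he => ⟨mem_nbhd_of_mem he, fun hqe => ?_⟩
    obtain ⟨z, hz, hne⟩ := exists_mem_ne (by omega : 1 < #Z) (q e)
    have h_filter : e ∈ {e ∈ E | p e ∈ X ∨ q e = z} := h_eq z hz ▸ mem_filter.2 ⟨he, hqe⟩
    exact (mem_filter.1 h_filter).2.resolve_right hne.symm
  obtain ⟨z, hz⟩ := card_pos.1 (by omega : 0 < #Z)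
  have h_card : r * 2 ≤ #{e ∈ E | p e ∈ X} := by
    have h_compl := card_filter_add_card_filter_not (s := E) fun e => p e ∈ X
    have h_del : deleteVerts p q E X {z} = {e ∈ E | p e ∉ X} := by
      ext e
      simp only [mem_deleteVerts, mem_filter, mem_singleton]
      grind
    have := h z hz
    rw [h_del] at this
    omega
  refine ⟨hX, hZ, h_mem, h_edge, hp.card_filter_eq_of_le (hX ▸ h_card),
    hq.card_filter_eq_of_le ?_⟩
  rwa [hZ, ← filter_congr h_mem]

end RegularC4

section Critical

variable {ι β γ : Type*} [DecidableEq β] {p : ι → β} {q : ι → γ}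
  {ρ k a j : ℕ} {E F M N R : Finset ι} {S Y : Finset β} {T : Finset γ}

lemma IsEdgeMatching.card_filter_left_mem (hM : IsEdgeMatching p q M) {Q : Finset β}
    (hQ : Q ⊆ M.image p) : #{e ∈ M | p e ∈ Q} = #Q := by
  rw [← card_image_of_injOn (hM.left.mono (mod_cast filter_subset _ M))]
  congr 1
  grind

variable [DecidableEq γ]

/-- A set `Y` of left vertices that is minimal among the nonempty sets with no more neighbours than
elements. -/
structure HallMinimal (p : ι → β) (q : ι → γ) (E : Finset ι) (Y : Finset β) : Prop where
  nonempty : Y.Nonempty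
  card_nbhd : #(nbhd p q E Y) = #Y
  lt_card_nbhd : ∀ Q ⊂ Y, Q.Nonempty → #Q < #(nbhd p q E Q)

/-- A Hall-minimal set `Y` together with a matching `R` that completes any perfect matching between
`Y` and its neighbours to one of size `#M`. -/
structure Critical (p : ι → β) (q : ι → γ) (E M : Finset ι) (Y : Finset β) (R : Finset ι) : Prop
    extends HallMinimal p q E Y where
  rest_subset : R ⊆ E
  rest_matching : IsEdgeMatching p q R
  rest_left : ∀ e ∈ R, p e ∉ Y
  rest_right : ∀ e ∈ R, q e ∉ nbhd p q E Y
  card_rest : #M = #R + #Y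

lemma IsEdgeMatching.image_filter_eq_nbhd (hM : IsEdgeMatching p q M) (hME : M ⊆ E) {Q : Finset β}
    (hQ : Q ⊆ M.image p) (h_card : #(nbhd p q E Q) ≤ #Q) :
    image q {e ∈ M | p e ∈ Q} = nbhd p q E Q := by
  refine eq_of_subset_of_card_le (image_subset_image (filter_subset_filter _ hME)) ?_
  rwa [card_image_of_injOn (hM.right.mono (mod_cast filter_subset _ M)),
    hM.card_filter_left_mem hQ]

lemma exists_critical (hM : IsEdgeMatching p q M) (hME : M ⊆ E) (hM₀ : M.Nonempty)
    (hq : ∀ e ∈ E, q e ∈ M.image q) :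
    ∃ Y R, Critical p q E M Y R := by
  have h_all : #(nbhd p q E (M.image p)) ≤ #(M.image p) := by
    rw [card_image_of_injOn hM.left, ← card_image_of_injOn hM.right]
    exact card_le_card (image_subset_iff.2 fun e he => hq e (mem_filter.1 he).1)
  obtain ⟨Y, ⟨hY, hYM, hY_card⟩, hY_min⟩ := exists_minimal_of_wellFoundedLT
    (fun Q : Finset β => Q.Nonempty ∧ Q ⊆ M.image p ∧ #(nbhd p q E Q) ≤ #Q)
    ⟨M.image p, hM₀.image p, subset_rfl, h_all⟩
  have h_nbhd := hM.image_filter_eq_nbhd hME hYM hY_card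
  have h_card := hM.card_filter_left_mem hYM
  refine ⟨Y, {e ∈ M | p e ∉ Y}, ⟨hY, ?_, fun Q hQ hQ₀ => ?_⟩, (filter_subset _ _).trans hME,
    hM.mono (filter_subset _ _), fun e he => (mem_filter.1 he).2, fun e he hqe => ?_, ?_⟩
  · rw [← h_nbhd, card_image_of_injOn (hM.right.mono (mod_cast filter_subset _ M)), h_card]
  · by_contra! h_le
    exact hQ.2 (hY_min ⟨hQ₀, hQ.1.trans hYM, h_le⟩ hQ.1)
  · rw [← h_nbhd, mem_image] at hqe
    obtain ⟨heM, hpe⟩ := mem_filter.1 he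
    obtain ⟨f, hf, hfe⟩ := hqe
    obtain ⟨hfM, hpf⟩ := mem_filter.1 hf
    exact hpe (hM.right hfM heM hfe ▸ hpf)
  · rw [← h_card, add_comm, card_filter_add_card_filter_not]

lemma HallMinimal.exists_edge_of_card_eq_two (hY : HallMinimal p q E Y) (hY₂ : #Y = 2) :
    ∀ y ∈ Y, ∀ z ∈ nbhd p q E Y, ∃ e ∈ E, p e = y ∧ q e = z := by
  intro y hy z hz
  have h_ssubset : {y} ⊂ Y :=
    (singleton_subset_iff.2 hy).ssubset_of_ne fun h_eq => by simp [← h_eq] at hY₂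
  have h_lt := hY.lt_card_nbhd {y} h_ssubset (singleton_nonempty y)
  have h_card := hY.card_nbhd
  rw [card_singleton] at h_lt
  rw [← mem_nbhd_singleton,
    eq_of_subset_of_card_le (nbhd_mono (singleton_subset_iff.2 hy)) (by omega)]
  exact hz

namespace Critical

variable [DecidableEq ι]

lemma isEdgeMatching_union_rest (hY : Critical p q E M Y R) (hN : IsEdgeMatching p q N)
    (hNE : N ⊆ E) (hNY : ∀ e ∈ N, p e ∈ Y) : IsEdgeMatching p q (N ∪ R) :=
  hN.union hY.rest_matching (fun e he f hf h_eq => hY.rest_left f hf (h_eq ▸ hNY e he))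
    fun e he f hf h_eq => hY.rest_right f hf (h_eq ▸ mem_nbhd_of_mem (hNE he) (hNY e he))

lemma card_union_rest (hY : Critical p q E M Y R) (hNY : ∀ e ∈ N, p e ∈ Y) :
    #(N ∪ R) = #N + #R :=
  card_union_of_disjoint (disjoint_left.2 fun e he heR => hY.rest_left e heR (hNY e he))

lemma rest_subset_deleteVerts_sdiff (hY : Critical p q E M Y R)
    (hF : ∀ f ∈ F, q f ∈ nbhd p q E Y) (hS : S ⊆ Y) (hT : T ⊆ nbhd p q E Y) :
    R ⊆ deleteVerts p q (E \ F) S T := fun e he =>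
  mem_deleteVerts.2 ⟨mem_sdiff.2 ⟨hY.rest_subset he, fun heF => hY.rest_right e he (hF e heF)⟩,
    fun heS => hY.rest_left e he (hS heS), fun heT => hY.rest_right e he (hT heT)⟩

lemma indepConnected_deleteVerts_sdiff (hY : Critical p q E M Y R) (h : Reducible p q ρ E M k)
    (hF : ∀ f ∈ F, q f ∈ nbhd p q E Y) (hS : S ⊆ Y) (hT : T ⊆ nbhd p q E Y) {I : Finset ι}
    (hI : I.Nonempty) (hIE : ∀ e ∈ I, e ∈ E \ F ∧ p e ∈ S ∧ q e ∈ T)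
    (hN : N ⊆ deleteVerts p q (E \ F) S T) (hN' : IsEdgeMatching p q N) (hNY : ∀ e ∈ N, p e ∈ Y)
    (ha : #Y ≤ #N + a)
    (h_loss : (2 * ρ + 1) * a + #F + (ρ + 2) * (#S + #T) ≤ j * (6 * ρ + 5) + #I) :
    IndepConnected (lineGraph p q) (k + 1 - j) (deleteVerts p q (E \ F) S T) := by
  have h_card := hY.card_rest
  have h_union := hY.card_union_rest hNY
  exact h.indepConnected_deleteVerts_sdiff hI hIE
    (union_subset hN (hY.rest_subset_deleteVerts_sdiff hF hS hT))
    (hY.isEdgeMatching_union_rest hN' (hN.trans (deleteVerts_subset.trans sdiff_subset)) hNY)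
    (a := a) (by omega) h_loss

lemma indepConnected_of_card_eq_one (hY : Critical p q E M Y R) (h : Reducible p q ρ E M k)
    (hY₁ : #Y = 1) : IndepConnected (lineGraph p q) (k + 1) E := by
  obtain ⟨b, rfl⟩ := card_eq_one.1 hY₁
  obtain ⟨c, hc⟩ := card_eq_one.1 (hY.card_nbhd.trans hY₁)
  have h_mem : c ∈ nbhd p q E {b} := hc ▸ mem_singleton_self c
  obtain ⟨e₀, he₀, rfl, rfl⟩ := mem_nbhd_singleton.1 h_mem
  refine .of_star_right he₀ (p e₀) (fun f hf => h.indepConnected_link (mem_starEdges.1 hf).1)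
    (fun f hf hpf hqf => ?_) ?_
  · have h_mem : q f ∈ nbhd p q E {p e₀} := mem_nbhd_singleton.2 ⟨f, hf, hpf, rfl⟩
    rw [hc, mem_singleton] at h_mem
    exact absurd h_mem hqf
  · rw [pair_eq_singleton]
    exact h.indepConnected_link he₀

lemma indepConnected_of_card_eq_two_of_deleteVerts (hY : Critical p q E M Y R)
    (h : Reducible p q ρ E M k) (hY₂ : #Y = 2) {z : γ} (hz : z ∈ nbhd p q E Y)
    (h_del : IndepConnected (lineGraph p q) k (deleteVerts p q E Y {z})) :
    IndepConnected (lineGraph p q) (k + 1) E := by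
  have h_edge := hY.exists_edge_of_card_eq_two hY₂
  obtain ⟨b, b', hbb', rfl⟩ := card_eq_two.1 hY₂
  obtain ⟨e₀, he₀, rfl, rfl⟩ := h_edge b (by simp) z hz
  obtain ⟨e₁, he₁, rfl, hq₁⟩ := h_edge b' (by simp) (q e₀) hz
  have h_star := card_starEdges_le (p := p) h.degLE_right he₀ he₁ (ne_of_apply_ne p hbb'.symm) hq₁
  refine .of_star_right he₀ (p e₁) (fun f hf => h.indepConnected_link (mem_starEdges.1 hf).1)
    (fun f hf hpf hqf => ?_) h_del
  refine hY.indepConnected_deleteVerts_sdiff h (I := {f}) (N := {e₁}) (a := 1) (j := 1) ?_ ?_ ?_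
    (by simp) ?_ ?_ ⟨by simp, by simp⟩ (by simp) (by simp [hY₂]) ?_
  · exact fun g hg => (mem_starEdges.1 hg).2.1 ▸ hz
  · simp [hpf]
  · simpa using mem_nbhd_of_mem hf (by simp [hpf])
  · simp [hf, mem_starEdges, hqf]
  · simp [mem_deleteVerts, mem_starEdges, he₁, hpf, hq₁, hbb'.symm, Ne.symm hqf]
  · simp only [card_singleton]
    omega

lemma indepConnected_of_card_eq_two (hY : Critical p q E M Y R) (h : Reducible p q ρ E M k)
    (hY₂ : #Y = 2) (h_C4 : ∀ X Z, IsRegularC4 p q (ρ + 2) E X Z → ∀ z ∈ Z,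
      IndepConnected (lineGraph p q) k (deleteVerts p q E X {z})) :
    IndepConnected (lineGraph p q) (k + 1) E := by
  have h_edge := hY.exists_edge_of_card_eq_two hY₂
  obtain ⟨b, hb⟩ := hY.nonempty
  by_cases h_loss : ∃ z ∈ nbhd p q E Y, #E ≤ #(deleteVerts p q E Y {z}) + (2 * ρ + 3)
  · obtain ⟨z, hz, hz_card⟩ := h_loss
    obtain ⟨e, he, rfl, rfl⟩ := h_edge b hb z hz
    have h_ssubset : deleteVerts p q E Y {q e} ⊂ E :=
      (ssubset_iff_of_subset deleteVerts_subset).2 ⟨e, he, by simp [mem_deleteVerts]⟩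
    have h_rest := hY.rest_subset_deleteVerts_sdiff (F := ∅) (by simp) subset_rfl
      (singleton_subset_iff.2 hz)
    rw [sdiff_empty] at h_rest
    exact hY.indepConnected_of_card_eq_two_of_deleteVerts h hY₂ hz
      (h.indepConnected _ h_ssubset R h_rest hY.rest_matching 2 (2 * ρ + 3) 1
        (hY₂ ▸ hY.card_rest.le) hz_card (by omega))
  · push Not at h_loss
    have h_card_nbhd := hY.card_nbhd.trans hY₂
    obtain ⟨z, hz⟩ := card_pos.1 (by omega : 0 < #(nbhd p q E Y))
    have h_regular := isRegularC4_of_card_le h.degLE_left h.degLE_right hY₂ h_card_nbhd h_edge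
      fun z hz => by have := h_loss z hz; omega
    exact hY.indepConnected_of_card_eq_two_of_deleteVerts h hY₂ hz (h_C4 _ _ h_regular z hz)

end Critical
end Critical

section Gadget

variable {ι β γ : Type*} [DecidableEq β] {p : ι → β} {q : ι → γ} {ρ k : ℕ}
  {E F M N R : Finset ι} {Q Y : Finset β} {T : Finset γ} {e₀ e₁ e₂ e₃ e₄ : ι}

/-- `N` is a matching of `E` that covers exactly the left vertices in `Q` and avoids the right
vertices in `T`. -/
structure IsSaturating (p : ι → β) (q : ι → γ) (E : Finset ι) (Q : Finset β) (T : Finset γ)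
    (N : Finset ι) : Prop where
  matching : IsEdgeMatching p q N
  subset : N ⊆ E
  image_left : N.image p = Q
  right_notMem : ∀ e ∈ N, q e ∉ T

namespace IsSaturating

lemma left_mem (hN : IsSaturating p q E Q T N) {e : ι} (he : e ∈ N) : p e ∈ Q :=
  hN.image_left ▸ mem_image_of_mem p he

lemma card_eq (hN : IsSaturating p q E Q T N) : #N = #Q := by
  rw [← hN.image_left, card_image_of_injOn hN.matching.left]

lemma exists_mem (hN : IsSaturating p q E Q T N) {b : β} (hb : b ∈ Q) : ∃ e ∈ N, p e = b :=
  mem_image.1 (hN.image_left ▸ hb)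

end IsSaturating

variable [DecidableEq γ]

/-- A configuration of edges `e₀ = (b, c)`, `e₁ = (b'', c)`, `e₂ = (x, d)` and `e₃` (one of `(x, c)`
and `(b, d)`) inside `Y` and its neighbourhood, such that each neighbour `c' ≠ c` of `b` or `x` can
be deleted together with `b, b'', c` and leave the rest of `Y` matchable. -/
structure Gadget (p : ι → β) (q : ι → γ) (E : Finset ι) (Y : Finset β) (e₀ e₁ e₂ e₃ : ι) :
    Prop where
  mem₀ : e₀ ∈ E
  mem₁ : e₁ ∈ E
  mem₂ : e₂ ∈ E
  mem₃ : e₃ ∈ E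
  left₀ : p e₀ ∈ Y
  left₁ : p e₁ ∈ Y
  left₂ : p e₂ ∈ Y
  ne₁₀ : p e₁ ≠ p e₀
  ne₂₀ : p e₂ ≠ p e₀
  ne₂₁ : p e₂ ≠ p e₁
  right₁ : q e₁ = q e₀
  right₂ : q e₂ ≠ q e₀
  extra : (p e₃ = p e₂ ∧ q e₃ = q e₀) ∨ (p e₃ = p e₀ ∧ q e₃ = q e₂)
  matchable : ∀ f ∈ E, p f = p e₀ ∨ p f = p e₂ → q f ≠ q e₀ →
    ∃ N, IsSaturating p q E (Y \ {p e₀, p e₁}) {q e₀, q f} N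

variable [DecidableEq ι]

lemma Critical.indepConnected_deleteVerts_triple (hY : Critical p q E M Y R)
    (h : Reducible p q ρ E M (k + 1)) {b b' y : β} (hb : b ∈ Y) (hb' : b' ∈ Y) (hbb' : b ≠ b')
    {T' : Finset γ} (hN : IsSaturating p q E (Y \ {b, b'}) T' N) (hT : T ⊆ nbhd p q E Y)
    (hNT : ∀ e ∈ N, p e ≠ y → q e ∉ T) (hF : ∀ f ∈ F, q f ∈ nbhd p q E Y)
    (hNF : ∀ e ∈ N, p e ≠ y → e ∉ F) {I : Finset ι} (hI : I.Nonempty)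
    (hIE : ∀ e ∈ I, e ∈ E \ F ∧ p e ∈ ({b, b', y} : Finset β) ∧ q e ∈ T)
    (h_loss : (2 * ρ + 1) * 3 + #F + (ρ + 2) * (3 + #T) ≤ 2 * (6 * ρ + 5) + #I) :
    IndepConnected (lineGraph p q) k (deleteVerts p q (E \ F) {b, b', y} T) := by
  have hNY : ∀ e ∈ N, p e ∈ Y := fun e he => (mem_sdiff.1 (hN.left_mem he)).1
  have h_union := hY.isEdgeMatching_union_rest hN.matching hN.subset hNY
  have h_delete := h_union.card_le_card_deleteVerts {y} (∅ : Finset γ)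
  have h_pair := card_sdiff_add_card_eq_card
    (insert_subset hb (singleton_subset_iff.2 hb') : {b, b'} ⊆ Y)
  rw [card_pair hbb', ← hN.card_eq] at h_pair
  rw [hY.card_union_rest hNY, card_singleton, card_empty] at h_delete
  have h_rest := hY.card_rest
  have h_triple := Nat.mul_le_mul_left (ρ + 2)
    (Nat.add_le_add_right (card_le_three (a := b) (b := b') (c := y)) #T)
  refine h.indepConnected_deleteVerts_sdiff (N := deleteVerts p q (N ∪ R) {y} ∅) (a := 3) (j := 2)
    hI hIE (fun e he => ?_) (h_union.mono deleteVerts_subset) (by omega) (by omega)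
  obtain ⟨he, hey, -⟩ := mem_deleteVerts.1 he
  rw [mem_singleton] at hey
  simp only [mem_deleteVerts, mem_sdiff, mem_insert, mem_singleton]
  rcases mem_union.1 he with heN | heR
  · have h_left := hN.left_mem heN
    have := hNT e heN hey
    have := hNF e heN hey
    have := hN.subset heN
    grind
  · have h_left := hY.rest_left e heR
    have h_right := hY.rest_right e heR
    have := hY.rest_subset heR
    grind

namespace Gadget

lemma indepConnected_of_edge_left (hG : Gadget p q E Y e₀ e₁ e₂ e₃) (hY : Critical p q E M Y R)
    (h : Reducible p q ρ E M (k + 1)) {f : ι} (hf : f ∈ E) (hpf : p f = p e₂)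
    (hqf : q f ≠ q e₀) : IndepConnected (lineGraph p q) k
      (deleteVerts p q E {p e₀, p e₁, p f} {q e₀, q f}) := by
  obtain ⟨N, hN⟩ := hG.matchable f hf (.inr hpf) hqf
  have h_card := card_eq_three.2 ⟨e₀, e₁, f, ne_of_apply_ne p hG.ne₁₀.symm,
    ne_of_apply_ne q hqf.symm, ne_of_apply_ne q (hG.right₁ ▸ hqf.symm), rfl⟩
  have h_triple := hY.indepConnected_deleteVerts_triple h (y := p f) (T := {q e₀, q f}) (F := ∅)
    (I := {e₀, e₁, f}) hG.left₀ hG.left₁ hG.ne₁₀.symm hN ?_ (fun e he _ => hN.right_notMem e he)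
    (by simp) (by simp) (by simp) ?_ ?_
  · rwa [sdiff_empty] at h_triple
  · exact insert_subset (mem_nbhd_of_mem hG.mem₀ hG.left₀)
      (singleton_subset_iff.2 (mem_nbhd_of_mem hf (hpf ▸ hG.left₂)))
  · simp [hG.mem₀, hG.mem₁, hf, hG.right₁]
  · rw [card_pair hqf.symm, h_card, card_empty]
    omega

lemma indepConnected_of_edge_right (hG : Gadget p q E Y e₀ e₁ e₂ e₃)
    (hY : Critical p q E M Y R) (h : Reducible p q ρ E M (k + 1))
    (hN : IsSaturating p q E (Y \ {p e₀, p e₁}) {q e₀, q e₂} N) (hF : ∀ f ∈ F, q f ∈ nbhd p q E Y)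
    (hF_card : #F ≤ ρ) (hNF : Disjoint N F) (h₀ : e₀ ∉ F) (h₁ : e₁ ∉ F) {f : ι} (hf : f ∈ E \ F)
    (hqf : q f = q e₂) : IndepConnected (lineGraph p q) k
      (deleteVerts p q (E \ F) {p e₀, p e₁, p f} {q e₀, q f}) := by
  have hqf₀ : q f ≠ q e₀ := hqf ▸ hG.right₂
  have h_card := card_eq_three.2 ⟨e₀, e₁, f, ne_of_apply_ne p hG.ne₁₀.symm,
    ne_of_apply_ne q hqf₀.symm, ne_of_apply_ne q (hG.right₁ ▸ hqf₀.symm), rfl⟩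
  refine hY.indepConnected_deleteVerts_triple h (y := p f) (T := {q e₀, q f})
    (I := {e₀, e₁, f}) hG.left₀ hG.left₁ hG.ne₁₀.symm hN ?_
    (fun e he _ => hqf ▸ hN.right_notMem e he) hF (fun e he _ => disjoint_left.1 hNF he)
    (by simp) ?_ ?_
  · exact insert_subset (mem_nbhd_of_mem hG.mem₀ hG.left₀)
      (singleton_subset_iff.2 (hqf ▸ mem_nbhd_of_mem hG.mem₂ hG.left₂))
  · simp [hG.mem₀, hG.mem₁, h₀, h₁, (mem_sdiff.1 hf).1, (mem_sdiff.1 hf).2, hG.right₁]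
  · rw [card_pair hqf₀.symm, h_card]
    omega

-- The count is tight here: it needs all of the five edges `e₀, …, e₄`.
lemma indepConnected_of_late (hG : Gadget p q E Y e₀ e₁ e₂ e₃) (hY : Critical p q E M Y R)
    (h : Reducible p q ρ E M (k + 1))
    (hN : IsSaturating p q E (Y \ {p e₀, p e₁}) {q e₀, q e₂} N) (he₄ : e₄ ∈ N)
    (hp₄ : p e₄ = p e₂) : IndepConnected (lineGraph p q) k
      (deleteVerts p q E {p e₀, p e₁, p e₂} {q e₀, q e₂, q e₄}) := by
  have hq₄ := hN.right_notMem e₄ he₄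
  rw [mem_insert, mem_singleton, not_or] at hq₄
  have h_card_right : #{q e₀, q e₂, q e₄} = 3 :=
    card_eq_three.2 ⟨_, _, _, hG.right₂.symm, Ne.symm hq₄.1, Ne.symm hq₄.2, rfl⟩
  have h_card : #{e₀, e₁, e₂, e₃, e₄} = 5 := by
    have := hG.ne₁₀
    have := hG.ne₂₀
    have := hG.ne₂₁
    have := hG.right₁
    have := hG.right₂
    have := hG.extra
    rw [card_insert_of_notMem, card_insert_of_notMem, card_insert_of_notMem, card_pair] <;> grind
  have h_triple := hY.indepConnected_deleteVerts_triple h (y := p e₂)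
    (T := {q e₀, q e₂, q e₄}) (F := ∅) (I := {e₀, e₁, e₂, e₃, e₄}) hG.left₀ hG.left₁
    hG.ne₁₀.symm hN ?_ (fun e he hpe => ?_) (by simp) (by simp) (by simp) ?_ ?_
  · rwa [sdiff_empty] at h_triple
  · exact insert_subset (mem_nbhd_of_mem hG.mem₀ hG.left₀) (insert_subset
      (mem_nbhd_of_mem hG.mem₂ hG.left₂)
      (singleton_subset_iff.2 (mem_nbhd_of_mem (hN.subset he₄) (hp₄ ▸ hG.left₂))))
  · have h_notMem := hN.right_notMem e he
    have h_right := hN.matching.right (mem_coe.2 he) (mem_coe.2 he₄)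
    grind
  · rcases hG.extra with ⟨hp₃, hq₃⟩ | ⟨hp₃, hq₃⟩ <;>
      simp [hG.mem₀, hG.mem₁, hG.mem₂, hG.mem₃, hN.subset he₄, hG.right₁, hp₃, hq₃, hp₄]
  · rw [h_card_right, h_card, card_empty]
    omega

lemma indepConnected_deleteVerts (hG : Gadget p q E Y e₀ e₁ e₂ e₃) (hY : Critical p q E M Y R)
    (h : Reducible p q ρ E M (k + 1)) :
    IndepConnected (lineGraph p q) (k + 1) (deleteVerts p q E {p e₀, p e₁} {q e₀}) := by
  obtain ⟨N, hN⟩ := hG.matchable e₂ hG.mem₂ (.inr rfl) hG.right₂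
  obtain ⟨e₄, he₄, hp₄⟩ := hN.exists_mem (b := p e₂) (by simp [hG.left₂, hG.ne₂₀, hG.ne₂₁])
  have hq₄ := hN.right_notMem e₄ he₄
  rw [mem_insert, mem_singleton, not_or] at hq₄
  set E₁ := deleteVerts p q E {p e₀, p e₁} {q e₀} with hE₁
  have h_mem : ∀ e, e ∈ E₁ ↔ e ∈ E ∧ p e ≠ p e₀ ∧ p e ≠ p e₁ ∧ q e ≠ q e₀ := fun e => by
    simp [hE₁, mem_deleteVerts, and_assoc]
  have he₂ : e₂ ∈ E₁ := (h_mem e₂).2 ⟨hG.mem₂, hG.ne₂₀, hG.ne₂₁, hG.right₂⟩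
  have he₄E : e₄ ∈ E₁ := (h_mem e₄).2
    ⟨hN.subset he₄, hp₄ ▸ hG.ne₂₀, hp₄ ▸ hG.ne₂₁, hq₄.1⟩
  have h_star := card_starEdges_le (p := q) (h.degLE_left.mono deleteVerts_subset) he₂ he₄E
    (ne_of_apply_ne q hq₄.2) hp₄
  refine .of_star_left he₂ (q e₄) (fun f hf => ?_) (fun f hf hqf hpf => ?_) ?_
  · obtain ⟨hfE, hpf, -⟩ := mem_starEdges.1 hf
    rw [hE₁, deleteVerts_deleteVerts, insert_union, singleton_union, singleton_union]
    exact hG.indepConnected_of_edge_left hY h (deleteVerts_subset hfE) hpf ((h_mem f).1 hfE).2.2.2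
  · set F := starEdges q p E₁ e₂ (q e₄)
    have h_sdiff : E₁ \ F = deleteVerts p q (E \ F) {p e₀, p e₁} {q e₀} := by
      grind [mem_deleteVerts]
    rw [h_sdiff, deleteVerts_deleteVerts, insert_union, singleton_union, singleton_union]
    refine hG.indepConnected_of_edge_right hY h hN (fun g hg => ?_) h_star ?_ ?_ ?_ ?_ hqf
    · obtain ⟨hgE, hpg, -⟩ := mem_starEdges.1 hg
      exact mem_nbhd_of_mem (deleteVerts_subset hgE) (hpg ▸ hG.left₂)
    · refine disjoint_left.2 fun g hg hgF => (mem_starEdges.1 hgF).2.2.2 ?_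
      rw [hN.matching.left hg he₄ ((mem_starEdges.1 hgF).2.1.trans hp₄.symm)]
    · exact fun he₀ => ((h_mem e₀).1 (mem_starEdges.1 he₀).1).2.1 rfl
    · exact fun he₁ => ((h_mem e₁).1 (mem_starEdges.1 he₁).1).2.2.1 rfl
    · exact mem_sdiff.2 ⟨deleteVerts_subset hf, fun hfF => hpf (mem_starEdges.1 hfF).2.1⟩
  · rw [hE₁, deleteVerts_deleteVerts, insert_union, singleton_union, singleton_union]
    exact hG.indepConnected_of_late hY h hN he₄ hp₄

lemma indepConnected (hG : Gadget p q E Y e₀ e₁ e₂ e₃) (hY : Critical p q E M Y R)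
    (h : Reducible p q ρ E M k) : IndepConnected (lineGraph p q) (k + 1) E := by
  have hc : q e₀ ∈ nbhd p q E Y := mem_nbhd_of_mem hG.mem₀ hG.left₀
  have h_star := card_starEdges_le (p := p) h.degLE_right hG.mem₀ hG.mem₁
    (ne_of_apply_ne p hG.ne₁₀) hG.right₁
  refine .of_star_right hG.mem₀ (p e₁)
    (fun f hf => h.indepConnected_link (mem_starEdges.1 hf).1) (fun f hf hpf hqf => ?_) ?_
  · obtain ⟨N, hN⟩ := hG.matchable f hf (.inl hpf) hqf
    have h_left : ∀ e ∈ N, p e ∈ Y ∧ p e ≠ p e₀ ∧ p e ≠ p e₁ := fun e he => by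
      simpa using hN.left_mem he
    have h_right : ∀ e ∈ N, q e ≠ q e₀ ∧ q e ≠ q f := fun e he => by
      simpa using hN.right_notMem e he
    have h_insert : IsEdgeMatching p q (insert e₁ N) :=
      hN.matching.insert (fun e he => (h_left e he).2.2)
        fun e he => hG.right₁ ▸ (h_right e he).1
    have h_pair := card_sdiff_add_card_eq_card
      (insert_subset hG.left₀ (singleton_subset_iff.2 hG.left₁) : {p e₀, p e₁} ⊆ Y)
    rw [card_pair hG.ne₁₀.symm, ← hN.card_eq] at h_pair
    have h_card := card_insert_of_notMem fun he₁ : e₁ ∈ N => (h_left e₁ he₁).2.2 rfl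
    refine hY.indepConnected_deleteVerts_sdiff h (I := {f}) (N := insert e₁ N) (a := 1) (j := 1)
      (fun g hg => (mem_starEdges.1 hg).2.1 ▸ hc) ?_ ?_ (by simp) ?_ ?_ h_insert ?_ (by omega) ?_
    · simp [hpf, hG.left₀]
    · simpa using mem_nbhd_of_mem hf (hpf ▸ hG.left₀)
    · simp [hf, mem_starEdges, hqf]
    · refine insert_subset ?_ fun e he => ?_
      · simp [mem_deleteVerts, mem_starEdges, hG.mem₁, hpf, hG.ne₁₀, hG.right₁, Ne.symm hqf]
      · simp [mem_deleteVerts, mem_starEdges, hN.subset he, h_left e he, h_right e he, hpf]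
    · exact (forall_mem_insert _ _ _).2 ⟨hG.left₁, fun e he => (h_left e he).1⟩
    · simp only [card_singleton]
      omega
  · cases k with
    | zero => exact .zero
    | succ k => exact hG.indepConnected_deleteVerts hY h

end Gadget
end Gadget

section Hall

variable {ι β γ : Type*} [DecidableEq β] [DecidableEq γ] {p : ι → β} {q : ι → γ}
  {E : Finset ι} {Q : Finset β} {T : Finset γ} {d r s : ℕ}

lemma exists_isSaturating (h : ∀ Q' ⊆ Q, #Q' ≤ #(nbhd p q E Q' \ T)) :
    ∃ N, IsSaturating p q E Q T N := by
  obtain ⟨f, hf_inj, hf⟩ := (all_card_le_biUnion_card_iff_exists_injective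
    fun b : Q => nbhd p q E {b.1} \ T).1 fun A => by
      have h_union : A.biUnion (fun b => nbhd p q E {b.1} \ T) =
          nbhd p q E (A.map (.subtype _)) \ T := by
        ext c
        simp only [mem_biUnion, mem_sdiff, mem_nbhd, mem_singleton, mem_map,
          Function.Embedding.subtype_apply]
        grind
      rw [h_union, ← card_map (.subtype _)]
      exact h _ fun b hb => property_of_mem_map_subtype A hb
  simp only [mem_sdiff, mem_nbhd_singleton] at hf
  choose g hgE hgp hgq using fun b => (hf b).1
  have hg_inj : g.Injective := fun b b' hb => Subtype.ext (by rw [← hgp, hb, hgp])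
  have hgN : ∀ e ∈ univ.map ⟨g, hg_inj⟩, ∃ b, g b = e := by simp
  refine ⟨univ.map ⟨g, hg_inj⟩, ⟨?_, ?_⟩, ?_, ?_, ?_⟩
  · intro e he e' he' h_eq
    obtain ⟨b, rfl⟩ := hgN e he
    obtain ⟨b', rfl⟩ := hgN e' he'
    rw [Subtype.ext ((hgp b).symm.trans (h_eq.trans (hgp b')))]
  · intro e he e' he' h_eq
    obtain ⟨b, rfl⟩ := hgN e he
    obtain ⟨b', rfl⟩ := hgN e' he'
    rw [hf_inj ((hgq b).symm.trans (h_eq.trans (hgq b')))]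
  · intro e he
    obtain ⟨b, rfl⟩ := hgN e he
    exact hgE b
  · ext b
    simp [hgp]
  · intro e he
    obtain ⟨b, rfl⟩ := hgN e he
    exact hgq b ▸ (hf b).2

lemma exists_isEdgeMatching_card_le_add (h : ∀ Q' ⊆ Q, #Q' ≤ #(nbhd p q E Q') + d) :
    ∃ M ⊆ E, IsEdgeMatching p q M ∧ #Q ≤ #M + d := by
  -- Join every vertex of `Q` to `d` new vertices on the right.
  obtain ⟨N, hN⟩ := exists_isSaturating (p := Sum.elim p Prod.fst) (q := Sum.map q Prod.snd)
    (E := E.disjSum (Q ×ˢ (univ : Finset (Fin d)))) (Q := Q) (T := ∅) fun Q' hQ' => by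
      obtain rfl | ⟨b, hb⟩ := Q'.eq_empty_or_nonempty
      · simp
      have h_card : #((nbhd p q E Q').disjSum (univ : Finset (Fin d))) = #(nbhd p q E Q') + d := by
        rw [card_disjSum, card_univ, Fintype.card_fin]
      rw [sdiff_empty]
      refine ((h Q' hQ').trans_eq h_card.symm).trans ?_
      refine card_le_card fun c hc => ?_
      rw [mem_nbhd]
      obtain ⟨c, h_nbhd, rfl⟩ | ⟨i, -, rfl⟩ := mem_disjSum.1 hc
      · obtain ⟨e, he, hpe, rfl⟩ := mem_nbhd.1 h_nbhd
        exact ⟨.inl e, inl_mem_disjSum.2 he, hpe, rfl⟩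
      · exact ⟨.inr (b, i), by simpa using hQ' hb, hb, rfl⟩
  refine ⟨N.toLeft, fun e he => inl_mem_disjSum.1 (hN.subset (mem_toLeft.1 he)), ⟨?_, ?_⟩, ?_⟩
  · exact fun e he f hf hef =>
      Sum.inl_injective (hN.matching.left (mem_toLeft.1 he) (mem_toLeft.1 hf) hef)
  · exact fun e he f hf hef => Sum.inl_injective
      (hN.matching.right (mem_toLeft.1 he) (mem_toLeft.1 hf) (congrArg Sum.inl hef))
  · have h_right : #N.toRight ≤ d := by
      simpa using card_le_card_of_injOn Prod.snd (t := univ) (by simp) fun e he f hf hef =>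
        Sum.inr_injective
          (hN.matching.right (mem_toRight.1 he) (mem_toRight.1 hf) (congrArg Sum.inr hef))
    rw [← hN.card_eq, ← card_toLeft_add_card_toRight]
    omega

lemma exists_isEdgeMatching_card_ge (hr : 0 < r) (hp : DegLE p r E)
    (hq : DegLE q r E) (h : r * s ≤ #E) : ∃ M ⊆ E, IsEdgeMatching p q M ∧ s ≤ #M := by
  have h_cover : ∀ Q ⊆ E.image p, #Q + s ≤ #(E.image p) + #(nbhd p q E Q) := by
    intro Q hQ
    have h_delete : deleteVerts p q E (E.image p \ Q) (nbhd p q E Q) = ∅ := by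
      refine filter_eq_empty_iff.2 fun e he ⟨hpe, hqe⟩ => hqe (mem_nbhd_of_mem he ?_)
      simpa [mem_image_of_mem p he] using hpe
    have h_card := card_add_card_le_card_deleteVerts (S := E.image p \ Q) (T := nbhd p q E Q)
      (I := ∅) hp hq (by simp)
    rw [h_delete, card_empty, add_zero, zero_add] at h_card
    have h_le := Nat.le_of_mul_le_mul_left (h.trans h_card) hr
    have h_sdiff := card_sdiff_add_card_eq_card hQ
    omega
  obtain ⟨M, hME, hM, h_card⟩ := exists_isEdgeMatching_card_le_add (p := p) (q := q)
    (E := E) (Q := E.image p) (d := #(E.image p) - s) fun Q hQ => by have := h_cover Q hQ; omega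
  have h_empty := h_cover ∅ (empty_subset _)
  rw [card_empty, nbhd, filter_false_of_mem (by simp), image_empty, card_empty] at h_empty
  exact ⟨M, hME, hM, by omega⟩

end Hall

section Selection

variable {ι β γ : Type*} [DecidableEq β] [DecidableEq γ] {p : ι → β} {q : ι → γ}
  {E : Finset ι} {Q Y Z : Finset β} {b b'' x y y' : β} {c c' : γ}

/-- A proper subset `Z` of `Y`, minimal among those with at least two elements and at most `#Z + 1`
neighbours. -/
structure MinTight (p : ι → β) (q : ι → γ) (E : Finset ι) (Y Z : Finset β) : Prop where
  ssubset : Z ⊂ Y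
  two_le_card : 2 ≤ #Z
  card_nbhd_le : #(nbhd p q E Z) ≤ #Z + 1
  lt_card_nbhd : ∀ Q ⊂ Z, 2 ≤ #Q → #Q + 1 < #(nbhd p q E Q)

lemma HallMinimal.exists_minTight (hY : HallMinimal p q E Y) (hY₃ : 3 ≤ #Y) :
    ∃ Z, MinTight p q E Y Z := by
  obtain ⟨y, hy⟩ := hY.nonempty
  have h_erase := card_erase_add_one hy
  have h_nbhd : #(nbhd p q E (Y.erase y)) ≤ #Y :=
    hY.card_nbhd ▸ card_le_card (nbhd_mono (erase_subset y Y))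
  obtain ⟨Z, ⟨hZY, hZ₂, hZ⟩, hZ_min⟩ := exists_minimal_of_wellFoundedLT
    (fun Z => Z ⊂ Y ∧ 2 ≤ #Z ∧ #(nbhd p q E Z) ≤ #Z + 1)
    ⟨Y.erase y, erase_ssubset hy, by omega, by omega⟩
  refine ⟨Z, hZY, hZ₂, hZ, fun Q hQ hQ₂ => ?_⟩
  by_contra! h_le
  exact hQ.2 (hZ_min ⟨hQ.trans hZY, hQ₂, h_le⟩ hQ.1)

namespace MinTight

lemma nonempty (hZ : MinTight p q E Y Z) : Z.Nonempty :=
  card_pos.1 (two_pos.trans_le hZ.two_le_card)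

lemma two_le_card_nbhd_singleton (hZ : MinTight p q E Y Z) (hY : HallMinimal p q E Y)
    (hx : x ∈ Z) : 2 ≤ #(nbhd p q E {x}) := by
  have h_lt := hY.lt_card_nbhd {x} ((singleton_subset_iff.2 hx).trans_ssubset hZ.ssubset)
    (singleton_nonempty x)
  rwa [card_singleton] at h_lt

lemma two_le_card_inter (hZ : MinTight p q E Y Z) (hY : HallMinimal p q E Y) :
    2 ≤ #(nbhd p q E Z ∩ nbhd p q E (Y \ Z)) := by
  have h_incl_excl := card_nbhd_union_add_card_inter p q E Z (Y \ Z)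
  rw [union_sdiff_of_subset hZ.ssubset.1, hY.card_nbhd] at h_incl_excl
  have h_lt := hY.lt_card_nbhd Z hZ.ssubset hZ.nonempty
  have h_lt' := hY.lt_card_nbhd (Y \ Z) (sdiff_ssubset hZ.ssubset.1 hZ.nonempty)
    (sdiff_nonempty.2 hZ.ssubset.2)
  have h_sdiff := card_sdiff_add_card_eq_card hZ.ssubset.1
  omega

lemma eq_pair (hZ : MinTight p q E Y Z) (hy : y ∈ Z) (hy' : y' ∈ Z) (hne : y ≠ y')
    (h_card : #(nbhd p q E {y}) ≤ 2) (h_card' : #(nbhd p q E {y'}) ≤ 2)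
    (hc : c ∈ nbhd p q E {y}) (hc' : c ∈ nbhd p q E {y'}) : {y, y'} = Z := by
  have h_subset : {y, y'} ⊆ Z := insert_subset hy (singleton_subset_iff.2 hy')
  by_contra h_ne
  have h_lt := hZ.lt_card_nbhd {y, y'} (h_subset.ssubset_of_ne h_ne) (card_pair hne).ge
  have h_incl_excl := card_nbhd_union_add_card_inter p q E {y} {y'}
  have h_common := card_pos.2 ⟨c, mem_inter.2 ⟨hc, hc'⟩⟩
  rw [card_pair hne] at h_lt
  rw [singleton_union] at h_incl_excl
  omega

lemma exists_edge (hZ : MinTight p q E Y Z) (hY : HallMinimal p q E Y) :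
    ∃ c ∈ nbhd p q E (Y \ Z), ∃ b ∈ Z, c ∈ nbhd p q E {b} ∧
      ∀ y ∈ Z, y ≠ b → #(nbhd p q E {y}) ≤ 2 → c ∉ nbhd p q E {y} := by
  by_contra! h_other
  have h_pair : ∀ c ∈ nbhd p q E Z ∩ nbhd p q E (Y \ Z), ∃ y y', y ≠ y' ∧ {y, y'} = Z ∧
      #(nbhd p q E {y}) ≤ 2 ∧ #(nbhd p q E {y'}) ≤ 2 ∧
        c ∈ nbhd p q E {y} ∧ c ∈ nbhd p q E {y'} := by
    intro c hc
    obtain ⟨hcZ, hcY⟩ := mem_inter.1 hc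
    obtain ⟨e, he, hpe, rfl⟩ := mem_nbhd.1 hcZ
    obtain ⟨y, hy, -, hy₂, hyc⟩ :=
      h_other _ hcY (p e) hpe (mem_nbhd_of_mem he (mem_singleton_self _))
    obtain ⟨y', hy', hne, hy₂', hyc'⟩ := h_other _ hcY y hy hyc
    exact ⟨y, y', hne.symm, hZ.eq_pair hy hy' hne.symm hy₂ hy₂' hyc hyc', hy₂, hy₂', hyc, hyc'⟩
  obtain ⟨c₁, hc₁, c₂, hc₂, hne⟩ := one_lt_card.1 (hZ.two_le_card_inter hY)
  obtain ⟨y, y', hyy', rfl, hy₂, hy₂', hyc₁, hyc₁'⟩ := h_pair c₁ hc₁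
  obtain ⟨z, z', -, hzz', -, -, hzc₂, hzc₂'⟩ := h_pair c₂ hc₂
  have hc₂_all : ∀ w ∈ ({y, y'} : Finset β), c₂ ∈ nbhd p q E {w} := by
    rw [← hzz']
    simp [hzc₂, hzc₂']
  have h_common : {c₁, c₂} ⊆ nbhd p q E {y} ∩ nbhd p q E {y'} := by
    simp [insert_subset_iff, hyc₁, hyc₁', hc₂_all]
  have h_card := card_le_card h_common
  have h_incl_excl := card_nbhd_union_add_card_inter p q E {y} {y'}
  have h_lt := hY.lt_card_nbhd _ hZ.ssubset hZ.nonempty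
  rw [card_pair hne] at h_card
  rw [card_pair hyy'] at h_lt
  rw [singleton_union] at h_incl_excl
  omega

lemma exists_second (hZ : MinTight p q E Y Z) (hY : HallMinimal p q E Y) (hb : b ∈ Z) (c : γ) :
    ∃ x ∈ Z, x ≠ b ∧ ∃ d ≠ c,
      d ∈ nbhd p q E {x} ∧ (c ∈ nbhd p q E {x} ∨ d ∈ nbhd p q E {b}) := by
  by_cases h_nbhd : ∃ x ∈ Z, x ≠ b ∧ c ∈ nbhd p q E {x}
  · obtain ⟨x, hx, hxb, hc⟩ := h_nbhd
    obtain ⟨d, hd, hdc⟩ := exists_mem_ne (hZ.two_le_card_nbhd_singleton hY hx) c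
    exact ⟨x, hx, hxb, d, hdc, hd, .inl hc⟩
  push Not at h_nbhd
  have h_incl_excl := card_nbhd_union_add_card_inter p q E {b} (Z.erase b)
  rw [singleton_union, insert_erase hb] at h_incl_excl
  have hb₂ := hZ.two_le_card_nbhd_singleton hY hb
  have h_erase := card_erase_add_one hb
  have hZ₂ := hZ.two_le_card
  have h_lt := hY.lt_card_nbhd (Z.erase b) ((erase_subset _ _).trans_ssubset hZ.ssubset)
    (card_pos.1 (by omega))
  have hZ_card := hZ.card_nbhd_le
  obtain ⟨d, hd⟩ := card_pos.1
    (by omega : 0 < #(nbhd p q E {b} ∩ nbhd p q E (Z.erase b)))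
  obtain ⟨hdb, hdZ⟩ := mem_inter.1 hd
  obtain ⟨e, he, hpe, rfl⟩ := mem_nbhd.1 hdZ
  obtain ⟨hpb, hpZ⟩ := mem_erase.1 hpe
  have h_mem : q e ∈ nbhd p q E {p e} := mem_nbhd_of_mem he (mem_singleton_self _)
  exact ⟨p e, hpZ, hpb, q e, fun h_eq => h_nbhd _ hpZ hpb (h_eq ▸ h_mem), h_mem, .inr hdb⟩

lemma exists_nbhd_singleton_eq_inter (hZ : MinTight p q E Y Z) (hY : HallMinimal p q E Y)
    (hQ : #(nbhd p q E Q) ≤ #Q + 1) (h_union : Q ∪ Z ⊂ Y) (h_inter : Q ∩ Z ⊂ Z)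
    (h_common : 2 ≤ #(nbhd p q E Q ∩ nbhd p q E Z)) :
    ∃ y ∈ Q ∩ Z, #(nbhd p q E {y}) ≤ 2 ∧ nbhd p q E {y} = nbhd p q E Q ∩ nbhd p q E Z := by
  have h_incl_excl := card_nbhd_union_add_card_inter p q E Q Z
  have h_lt := hY.lt_card_nbhd (Q ∪ Z) h_union (hZ.nonempty.mono subset_union_right)
  have h_card := card_union_add_card_inter Q Z
  have hZ_card := hZ.card_nbhd_le
  have h_nonempty : (Q ∩ Z).Nonempty := card_pos.1 (by omega)
  have h_lt' := hY.lt_card_nbhd (Q ∩ Z) (h_inter.trans hZ.ssubset) h_nonempty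
  have h_eq : nbhd p q E (Q ∩ Z) = nbhd p q E Q ∩ nbhd p q E Z := eq_of_subset_of_card_le
    (subset_inter (nbhd_mono inter_subset_left) (nbhd_mono inter_subset_right)) (by omega)
  have h_one : #(Q ∩ Z) = 1 := by
    by_contra h_ne
    have h_pos := card_pos.2 h_nonempty
    have := hZ.lt_card_nbhd (Q ∩ Z) h_inter (by omega)
    rw [h_eq] at this
    omega
  obtain ⟨y, hy⟩ := card_eq_one.1 h_one
  rw [hy] at h_eq
  exact ⟨y, hy ▸ mem_singleton_self y, by rw [h_eq]; omega, h_eq⟩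

lemma card_le_card_nbhd_sdiff (hZ : MinTight p q E Y Z) (hY : HallMinimal p q E Y)
    (hb : b ∈ Z) (hb'' : b'' ∈ Y \ Z) (hcb : c ∈ nbhd p q E {b}) (hc' : c' ∈ nbhd p q E Z)
    (hne : c' ≠ c) (h_other : ∀ y ∈ Z, y ≠ b → #(nbhd p q E {y}) ≤ 2 → c ∉ nbhd p q E {y})
    (hQ : Q ⊆ Y \ {b, b''}) : #Q ≤ #(nbhd p q E Q \ {c, c'}) := by
  by_contra! h_gt
  obtain ⟨hb''Y, hb''Z⟩ := mem_sdiff.1 hb''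
  have hQY : Q ⊆ Y := hQ.trans sdiff_subset
  have hbQ : b ∉ Q := fun h => by simpa using hQ h
  have hb''Q : b'' ∉ Q := fun h => by simpa using hQ h
  have h_lt := hY.lt_card_nbhd Q (ssubset_of_subset_of_ne hQY fun h => hb''Q (h ▸ hb''Y))
    (card_pos.1 (by omega))
  have h_sdiff := card_sdiff_add_card_inter (nbhd p q E Q) {c, c'}
  have h_pair := card_pair hne.symm
  have h_subset : {c, c'} ⊆ nbhd p q E Q :=
    inter_eq_right.1 (eq_of_subset_of_card_le inter_subset_right (by omega))
  have hcZ : c ∈ nbhd p q E Z := nbhd_mono (singleton_subset_iff.2 hb) hcb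
  have h_common : {c, c'} ⊆ nbhd p q E Q ∩ nbhd p q E Z :=
    subset_inter h_subset (insert_subset hcZ (singleton_subset_iff.2 hc'))
  have h_two := card_le_card h_common
  have h_inter := card_le_card (inter_subset_right (s₁ := nbhd p q E Q) (s₂ := {c, c'}))
  obtain ⟨y, hy, hy₂, hy_eq⟩ := hZ.exists_nbhd_singleton_eq_inter hY (by omega)
    ((union_subset hQY hZ.ssubset.1).ssubset_of_ne fun h => by grind)
    (inter_subset_right.ssubset_of_ne fun h => by grind) (by omega)
  obtain ⟨hyQ, hyZ⟩ := mem_inter.1 hy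
  refine h_other y hyZ (fun h => hbQ (h ▸ hyQ)) hy₂ (hy_eq ▸ h_common (mem_insert_self _ _))

end MinTight

lemma HallMinimal.exists_gadget (hY : HallMinimal p q E Y) (hY₃ : 3 ≤ #Y) :
    ∃ e₀ e₁ e₂ e₃, Gadget p q E Y e₀ e₁ e₂ e₃ := by
  obtain ⟨Z, hZ⟩ := hY.exists_minTight hY₃
  obtain ⟨c, hcY, b, hb, hcb, h_other⟩ := hZ.exists_edge hY
  obtain ⟨x, hx, hxb, d, hdc, hdx, h_extra⟩ := hZ.exists_second hY hb c
  obtain ⟨e₁, he₁, hp₁, hq₁⟩ := mem_nbhd.1 hcY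
  obtain ⟨e₀, he₀, rfl, rfl⟩ := mem_nbhd_singleton.1 hcb
  obtain ⟨e₂, he₂, rfl, rfl⟩ := mem_nbhd_singleton.1 hdx
  obtain ⟨hp₁Y, hp₁Z⟩ := mem_sdiff.1 hp₁
  obtain ⟨e₃, he₃, h₃⟩ : ∃ e₃ ∈ E,
      (p e₃ = p e₂ ∧ q e₃ = q e₀) ∨ (p e₃ = p e₀ ∧ q e₃ = q e₂) := by
    rcases h_extra with h | h <;> obtain ⟨e, he, hpe, hqe⟩ := mem_nbhd_singleton.1 h
    exacts [⟨e, he, .inl ⟨hpe, hqe⟩⟩, ⟨e, he, .inr ⟨hpe, hqe⟩⟩]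
  refine ⟨e₀, e₁, e₂, e₃, he₀, he₁, he₂, he₃, hZ.ssubset.1 hb, hp₁Y, hZ.ssubset.1 hx,
    fun h => hp₁Z (h ▸ hb), hxb, fun h => hp₁Z (h ▸ hx), hq₁, hdc, h₃, fun f hf hpf hqf => ?_⟩
  have hfZ : q f ∈ nbhd p q E Z := mem_nbhd_of_mem hf (by rcases hpf with h | h <;> rwa [h])
  exact exists_isSaturating fun Q hQ => hZ.card_le_card_nbhd_sdiff hY hb hp₁ hcb hfZ hqf h_other hQ

end Selection

section Components

variable {ι β γ : Type*} [DecidableEq β] [DecidableEq γ] {p : ι → β} {q : ι → γ}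
  {r : ℕ} {E F : Finset ι} {X X' : Finset β} {Z Z' : Finset γ}

lemma DegLE.filter_eq_filter_of_card_eq (hp : DegLE p r E) (hF : F ⊆ E) {b : β}
    (h : #{e ∈ F | p e = b} = r) : {e ∈ F | p e = b} = {e ∈ E | p e = b} :=
  eq_of_subset_of_card_le (filter_subset_filter _ hF) ((hp b).trans h.ge)

namespace IsRegularC4

lemma swap (h : IsRegularC4 p q r E X Z) : IsRegularC4 q p r E Z X where
  card_left := h.card_right
  card_right := h.card_left
  mem_iff e he := (h.mem_iff e he).symm
  exists_edge z hz x hx := by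
    obtain ⟨e, he, hpe, hqe⟩ := h.exists_edge x hx z hz
    exact ⟨e, he, hqe, hpe⟩
  degree_left := h.degree_right
  degree_right := h.degree_left

lemma mono (h : IsRegularC4 p q r F X Z) (hF : F ⊆ E) (hp : DegLE p r E) (hq : DegLE q r E) :
    IsRegularC4 p q r E X Z := by
  have h_left : ∀ x ∈ X, {e ∈ F | p e = x} = {e ∈ E | p e = x} := fun x hx =>
    hp.filter_eq_filter_of_card_eq hF (h.degree_left x hx)
  have h_right : ∀ z ∈ Z, {e ∈ F | q e = z} = {e ∈ E | q e = z} := fun z hz =>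
    hq.filter_eq_filter_of_card_eq hF (h.degree_right z hz)
  refine ⟨h.card_left, h.card_right, fun e he => ⟨fun hpe => ?_, fun hqe => ?_⟩,
    fun x hx z hz => ?_, fun x hx => h_left x hx ▸ h.degree_left x hx,
    fun z hz => h_right z hz ▸ h.degree_right z hz⟩
  · have h_mem : e ∈ {e' ∈ F | p e' = p e} := h_left _ hpe ▸ mem_filter.2 ⟨he, rfl⟩
    exact (h.mem_iff e (mem_filter.1 h_mem).1).1 hpe
  · have h_mem : e ∈ {e' ∈ F | q e' = q e} := h_right _ hqe ▸ mem_filter.2 ⟨he, rfl⟩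
    exact (h.mem_iff e (mem_filter.1 h_mem).1).2 hqe
  · obtain ⟨e, he, h_ends⟩ := h.exists_edge x hx z hz
    exact ⟨e, hF he, h_ends⟩

lemma left_nonempty (h : IsRegularC4 p q r E X Z) : X.Nonempty :=
  card_pos.1 (h.card_left ▸ two_pos)

lemma left_subset (h : IsRegularC4 p q r E X Z) : X ⊆ E.image p := by
  intro x hx
  obtain ⟨z, hz⟩ := h.swap.left_nonempty
  obtain ⟨e, he, rfl, -⟩ := h.exists_edge x hx z hz
  exact mem_image_of_mem p he

lemma right_eq (h : IsRegularC4 p q r E X Z) (h' : IsRegularC4 p q r E X' Z')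
    (hX : ¬Disjoint X X') : Z = Z' := by
  obtain ⟨x, hx, hx'⟩ := not_disjoint_iff.1 hX
  refine eq_of_subset_of_card_le (fun z hz => ?_) (h'.card_right.trans h.card_right.symm).le
  obtain ⟨e, he, rfl, rfl⟩ := h.exists_edge x hx z hz
  exact (h'.mem_iff e he).1 hx'

lemma left_eq (h : IsRegularC4 p q r E X Z) (h' : IsRegularC4 p q r E X' Z')
    (hZ : ¬Disjoint Z Z') : X = X' :=
  h.swap.right_eq h'.swap hZ

lemma card_le_card_deleteVerts (h : IsRegularC4 p q r E X Z) (hp : DegLE p r E) (hq : DegLE q r E)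
    {z : γ} (hz : z ∈ Z) : #E ≤ #(deleteVerts p q E X {z}) + 2 * r := by
  have h_card := card_add_card_le_card_deleteVerts (S := X) (T := {z}) (I := {e ∈ E | q e = z})
    hp hq fun e he => by
      obtain ⟨heE, hqe⟩ := mem_filter.1 he
      exact ⟨heE, (h.mem_iff e heE).2 (hqe ▸ hz), mem_singleton.2 hqe⟩
  rw [h.degree_right z hz, h.card_left, card_singleton] at h_card
  omega

lemma card_matching_le_card_deleteVerts {M : Finset ι} (h : IsRegularC4 p q r E X Z)
    (hM : IsEdgeMatching p q M) (hME : M ⊆ E) {z : γ} (hz : z ∈ Z) :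
    #M ≤ #(deleteVerts p q M X {z}) + 2 := by
  have h_card := hM.card_le_card_deleteVerts X (∅ : Finset γ)
  rw [h.card_left, card_empty] at h_card
  refine h_card.trans (Nat.add_le_add_right (card_le_card fun e he => ?_) 2)
  obtain ⟨heM, hpe, -⟩ := mem_deleteVerts.1 he
  refine mem_deleteVerts.2 ⟨heM, hpe, fun hqe => hpe ((h.mem_iff e (hME heM)).2 ?_)⟩
  rwa [mem_singleton.1 hqe]

end IsRegularC4

open Classical in
/-- The pairs of vertex sets of the connected components of `E` that are `r`-regular `C₄`s. -/
noncomputable def c4Components (p : ι → β) (q : ι → γ) (r : ℕ) (E : Finset ι) :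
    Finset (Finset β × Finset γ) :=
  {C ∈ (E.image p).powerset ×ˢ (E.image q).powerset | IsRegularC4 p q r E C.1 C.2}

lemma mem_c4Components {C : Finset β × Finset γ} :
    C ∈ c4Components p q r E ↔ IsRegularC4 p q r E C.1 C.2 := by
  classical
  rw [c4Components, mem_filter, and_iff_right_iff_imp, mem_product, mem_powerset, mem_powerset]
  exact fun h => ⟨h.left_subset, h.swap.left_subset⟩

lemma c4Components_mono (hF : F ⊆ E) (hp : DegLE p r E) (hq : DegLE q r E) :
    c4Components p q r F ⊆ c4Components p q r E :=
  fun _ hC => mem_c4Components.2 ((mem_c4Components.1 hC).mono hF hp hq)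

lemma IsRegularC4.card_c4Components_deleteVerts_lt (h : IsRegularC4 p q r E X Z)
    (hp : DegLE p r E) (hq : DegLE q r E) (T : Finset γ) :
    #(c4Components p q r (deleteVerts p q E X T)) < #(c4Components p q r E) := by
  refine card_lt_card ((ssubset_iff_of_subset (c4Components_mono deleteVerts_subset hp hq)).2
    ⟨(X, Z), mem_c4Components.2 h, fun h_mem => ?_⟩)
  obtain ⟨x, hx⟩ := h.left_nonempty
  obtain ⟨e, he, rfl⟩ := mem_image.1 ((mem_c4Components.1 h_mem).left_subset hx)
  exact (mem_deleteVerts.1 he).2.1 hx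

end Components

section Connectivity

variable {ι β γ : Type*} [DecidableEq ι] [DecidableEq β] [DecidableEq γ] {p : ι → β} {q : ι → γ}
  {ρ k : ℕ} {E M : Finset ι} {X : Finset β} {Z : Finset γ}

lemma Reducible.indepConnected_of_nonempty (h : Reducible p q ρ E M k) (hE : E.Nonempty)
    (h_C4 : ∀ X Z, IsRegularC4 p q (ρ + 2) E X Z → ∀ z ∈ Z,
      IndepConnected (lineGraph p q) k (deleteVerts p q E X {z})) :
    IndepConnected (lineGraph p q) (k + 1) E := by
  by_cases hq : ∀ e ∈ E, q e ∈ M.image q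
  · have hM : M.Nonempty := image_nonempty.1 (hE.elim fun e he => ⟨q e, hq e he⟩)
    obtain ⟨Y, R, hY⟩ := exists_critical h.matching h.subset hM hq
    have hY_pos := card_pos.2 hY.nonempty
    obtain hY₁ | hY₂ | hY₃ : #Y = 1 ∨ #Y = 2 ∨ 3 ≤ #Y := by omega
    · exact hY.indepConnected_of_card_eq_one h hY₁
    · exact hY.indepConnected_of_card_eq_two h hY₂ h_C4
    · obtain ⟨e₀, e₁, e₂, e₃, hG⟩ := hY.exists_gadget hY₃
      exact hG.indepConnected hY h
  · push Not at hq
    obtain ⟨e, he, h_notMem⟩ := hq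
    exact h.indepConnected_of_forall_ne he fun m hm h_eq =>
      h_notMem (h_eq ▸ mem_image_of_mem q hm)

/-- The lower bound `((2ρ + 1) ν + |E| - #{(ρ + 2)-regular C₄ components}) / (6ρ + 5)` on the
connectivity of the matching complex of `E`, with any matching in place of a maximum one. -/
def ConnectivityBound (p : ι → β) (q : ι → γ) (ρ : ℕ) (E : Finset ι) : Prop :=
  ∀ M ⊆ E, IsEdgeMatching p q M → ∀ k,
    (6 * ρ + 5) * k + #(c4Components p q (ρ + 2) E) < (2 * ρ + 1) * #M + #E →
      IndepConnected (lineGraph p q) (k + 1) E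

lemma reducible_of_forall_connectivityBound (hp : DegLE p (ρ + 2) E) (hq : DegLE q (ρ + 2) E)
    (ih : ∀ F ⊂ E, ConnectivityBound p q ρ F) (hM : IsEdgeMatching p q M) (hME : M ⊆ E)
    (hM_max : ∀ N ⊆ E, IsEdgeMatching p q N → #N ≤ #M)
    (h_lt : (6 * ρ + 5) * k + #(c4Components p q (ρ + 2) E) < (2 * ρ + 1) * #M + #E) :
    Reducible p q ρ E M k := by
  refine ⟨hp, hq, hM, hME, hM_max, fun F hF N hNF hN a w j ha hw h_loss => ?_⟩
  obtain hj | hj := Nat.lt_or_ge k j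
  · rw [Nat.sub_eq_zero_of_le hj]
    exact .zero
  obtain ⟨l, rfl⟩ := Nat.exists_eq_add_of_le hj
  rw [add_assoc, Nat.add_sub_cancel_left]
  have h_components := card_le_card (c4Components_mono hF.1 hp hq)
  have h_matching := Nat.mul_le_mul_left (2 * ρ + 1) ha
  refine ih F hF N hNF hN l ?_
  rw [mul_add] at h_lt h_matching
  rw [mul_comm j] at h_loss
  omega

lemma IsRegularC4.indepConnected_deleteVerts (h : IsRegularC4 p q (ρ + 2) E X Z)
    (hp : DegLE p (ρ + 2) E) (hq : DegLE q (ρ + 2) E)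
    (ih : ∀ F ⊂ E, ConnectivityBound p q ρ F) (hM : IsEdgeMatching p q M) (hME : M ⊆ E)
    (h_lt : (6 * ρ + 5) * k + #(c4Components p q (ρ + 2) E) < (2 * ρ + 1) * #M + #E)
    {z : γ} (hz : z ∈ Z) : IndepConnected (lineGraph p q) k (deleteVerts p q E X {z}) := by
  obtain _ | l := k
  · exact .zero
  have h_components := h.card_c4Components_deleteVerts_lt hp hq {z}
  have h_ssubset : deleteVerts p q E X {z} ⊂ E := deleteVerts_subset.ssubset_of_ne fun h_eq => by
    rw [h_eq] at h_components
    exact h_components.false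
  have h_card := h.card_le_card_deleteVerts hp hq hz
  have h_matching := Nat.mul_le_mul_left (2 * ρ + 1)
    (h.card_matching_le_card_deleteVerts hM hME hz)
  refine ih _ h_ssubset _ (deleteVerts_mono hME) (hM.mono deleteVerts_subset) l ?_
  rw [mul_add] at h_lt h_matching
  omega

theorem connectivityBound (E : Finset ι) (hp : DegLE p (ρ + 2) E) (hq : DegLE q (ρ + 2) E) :
    ConnectivityBound p q ρ E := by
  induction E using Finset.strongInduction with
  | H E ih =>
  replace ih : ∀ F ⊂ E, ConnectivityBound p q ρ F := fun F hF =>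
    ih F hF (hp.mono hF.1) (hq.mono hF.1)
  intro N hNE hN k h_lt
  obtain ⟨M, ⟨hME, hM⟩, hM_max⟩ : ∃ M, (M ⊆ E ∧ IsEdgeMatching p q M) ∧
      ∀ N ⊆ E, IsEdgeMatching p q N → #N ≤ #M := by
    classical
    obtain ⟨M, hM, hM_max⟩ := exists_max_image {M ∈ E.powerset | IsEdgeMatching p q M} card
      ⟨N, mem_filter.2 ⟨mem_powerset.2 hNE, hN⟩⟩
    simp only [mem_filter, mem_powerset, and_imp] at hM hM_max
    exact ⟨M, hM, hM_max⟩
  replace h_lt := h_lt.trans_le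
    (Nat.add_le_add_right (Nat.mul_le_mul_left (2 * ρ + 1) (hM_max N hNE hN)) _)
  have hE : E.Nonempty := by
    rw [nonempty_iff_ne_empty]
    rintro rfl
    simp [subset_empty.1 hME] at h_lt
  have h_reducible := reducible_of_forall_connectivityBound hp hq ih hM hME hM_max h_lt
  exact h_reducible.indepConnected_of_nonempty hE fun X Z h z hz =>
    h.indepConnected_deleteVerts hp hq ih hM hME h_lt hz

end Connectivity

section RainbowMatching

variable {ι α β γ : Type*} [DecidableEq α] [DecidableEq β] [DecidableEq γ]
  {a : ι → α} {p : ι → β} {q : ι → γ} {ρ r k : ℕ} {E : Finset ι}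

lemma mul_card_le_card_filter_mem (ha : ∀ x, r ≤ #{e ∈ E | a e = x}) (S : Finset α) :
    r * #S ≤ #{e ∈ E | a e ∈ S} := by
  refine mul_card_image_le_card_of_maps_to (f := a) (fun e he => (mem_filter.1 he).2) r
    fun x hx => (ha x).trans (card_le_card fun e he => ?_)
  obtain ⟨heE, rfl⟩ := mem_filter.1 he
  exact mem_filter.2 ⟨mem_filter.2 ⟨heE, hx⟩, rfl⟩

lemma indepConnected_filter_mem [DecidableEq ι] (ha : ∀ x, ρ + 2 ≤ #{e ∈ E | a e = x})
    (hp : DegLE p (ρ + 2) E) (hq : DegLE q (ρ + 2) E) (S : Finset α)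
    (h : (6 * ρ + 5) * k + #(c4Components p q (ρ + 2) E) < (3 * ρ + 3) * #S) :
    IndepConnected (lineGraph p q) (k + 1) {e ∈ E | a e ∈ S} := by
  have h_subset : {e ∈ E | a e ∈ S} ⊆ E := filter_subset _ _
  have h_edges := mul_card_le_card_filter_mem ha S
  obtain ⟨M, hM_subset, hM, hM_card⟩ := exists_isEdgeMatching_card_ge (by omega)
    (hp.mono h_subset) (hq.mono h_subset) h_edges
  have h_components := card_le_card (c4Components_mono h_subset hp hq)
  refine connectivityBound _ (hp.mono h_subset) (hq.mono h_subset) M hM_subset hM k ?_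
  calc (6 * ρ + 5) * k + #(c4Components p q (ρ + 2) {e ∈ E | a e ∈ S})
      < (3 * ρ + 3) * #S := by omega
    _ = (2 * ρ + 1) * #S + (ρ + 2) * #S := by ring
    _ ≤ (2 * ρ + 1) * #M + #{e ∈ E | a e ∈ S} := by gcongr

theorem card_le_card_c4Components_add [Fintype α] {ν : ℕ} (ha : ∀ x, ρ + 2 ≤ #{e ∈ E | a e = x})
    (hp : DegLE p (ρ + 2) E) (hq : DegLE q (ρ + 2) E)
    (hν : ∀ τ ⊆ E, IsEdgeMatching p q τ → Set.InjOn a τ → #τ ≤ ν) :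
    (3 * ρ + 3) * Fintype.card α ≤ #(c4Components p q (ρ + 2) E) + (6 * ρ + 5) * ν := by
  classical
  by_contra! h_lt
  obtain ⟨d, hd⟩ : ∃ d, Fintype.card α = ν + d + 1 := Nat.exists_eq_add_of_lt (by nlinarith)
  obtain ⟨τ, hτE, hτ, hτ_inj, hτ_card⟩ := exists_indepSet_card_le (G := lineGraph p q) (V := E)
    (a := a) (d := d) fun S => by
      obtain hS | hS := Nat.lt_or_ge d #S
      · obtain ⟨k, hk⟩ := Nat.exists_eq_add_of_lt hS
        rw [hk, add_assoc, Nat.add_sub_cancel_left]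
        refine indepConnected_filter_mem ha hp hq S ?_
        have := card_le_univ S
        nlinarith
      · rw [Nat.sub_eq_zero_of_le hS]
        exact .zero
  have := hν τ hτE (isEdgeMatching_of_isIndepSet hτ) hτ_inj
  omega

end RainbowMatching

section Link

variable {ι β γ : Type*} [DecidableEq β] [DecidableEq γ] {p : ι → β} {q : ι → γ} {r : ℕ}
  {E : Finset ι} {X : Finset β} {Z : Finset γ} {b b' : β} {c c' : γ}

lemma IsRegularC4.sum_card_filter_left (h : IsRegularC4 p q r E X Z) {x : β} (hx : x ∈ X) :
    ∑ z ∈ Z, #{e ∈ E | p e = x ∧ q e = z} = r := by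
  rw [← h.degree_left x hx, card_eq_sum_card_fiberwise (f := q) (t := Z) fun e he => ?_]
  · simp only [filter_filter]
  · obtain ⟨heE, rfl⟩ := mem_filter.1 he
    exact (h.mem_iff e heE).1 hx

lemma IsRegularC4.sum_card_filter_right (h : IsRegularC4 p q r E X Z) {z : γ} (hz : z ∈ Z) :
    ∑ x ∈ X, #{e ∈ E | p e = x ∧ q e = z} = r := by
  simpa only [and_comm] using h.swap.sum_card_filter_left hz

lemma IsRegularC4.card_filter_pos (h : IsRegularC4 p q r E X Z) {x : β} (hx : x ∈ X) {z : γ}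
    (hz : z ∈ Z) : 0 < #{e ∈ E | p e = x ∧ q e = z} := by
  obtain ⟨e, he, h_ends⟩ := h.exists_edge x hx z hz
  exact card_pos.2 ⟨e, mem_filter.2 ⟨he, h_ends⟩⟩

lemma count_map_prodMk (E : Finset ι) (y : β) (z : γ) :
    (E.val.map fun e => (p e, q e)).count (y, z) = #{e ∈ E | p e = y ∧ q e = z} := by
  simp only [Multiset.count_map, Prod.mk.injEq, eq_comm (a := y), eq_comm (a := z)]
  rfl

lemma IsRegularC4.filter_map_prodMk (h : IsRegularC4 p q r E {b, b'} {c, c'}) (hb : b ≠ b')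
    (hc : c ≠ c') :
    (E.val.map fun e => (p e, q e)).filter
        (fun e => e.1 = b ∨ e.1 = b' ∨ e.2 = c ∨ e.2 = c') =
      #{e ∈ E | p e = b ∧ q e = c} • {(b, c)} + #{e ∈ E | p e = b ∧ q e = c'} • {(b, c')} +
        #{e ∈ E | p e = b' ∧ q e = c} • {(b', c)} +
          #{e ∈ E | p e = b' ∧ q e = c'} • {(b', c')} := by
  refine Multiset.ext.2 fun ⟨y, z⟩ => ?_
  simp only [Multiset.count_filter, count_map_prodMk, Multiset.count_add, Multiset.count_nsmul,
    Multiset.count_singleton, Prod.mk.injEq]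
  by_cases hyz : y ∈ ({b, b'} : Finset β) ∧ z ∈ ({c, c'} : Finset γ)
  · simp only [mem_insert, mem_singleton] at hyz
    obtain ⟨rfl | rfl, rfl | rfl⟩ := hyz <;> simp [hb, hc, hb.symm, hc.symm]
  · have h_zero : y ∈ ({b, b'} : Finset β) ∨ z ∈ ({c, c'} : Finset γ) →
        #{e ∈ E | p e = y ∧ q e = z} = 0 := by
      intro h_or
      refine card_eq_zero.2 (filter_eq_empty_iff.2 ?_)
      rintro e he ⟨rfl, rfl⟩
      have := h.mem_iff e he
      tauto
    simp only [mem_insert, mem_singleton] at hyz h_zero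
    grind

lemma IsRegularC4.isRegC4Component (h : IsRegularC4 p q r E {b, b'} {c, c'}) :
    IsRegC4Component (E.val.map fun e => (p e, q e)) r b b' c c' := by
  have hb : b ≠ b' := card_pair_eq_two_iff.1 h.card_left
  have hc : c ≠ c' := card_pair_eq_two_iff.1 h.card_right
  have hb_mem := mem_insert_self b {b'}
  have hb'_mem : b' ∈ ({b, b'} : Finset β) := mem_insert_of_mem (mem_singleton_self b')
  have hc_mem := mem_insert_self c {c'}
  have hc'_mem : c' ∈ ({c, c'} : Finset γ) := mem_insert_of_mem (mem_singleton_self c')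
  refine ⟨hb, hc, _, _, _, _, h.card_filter_pos hb_mem hc_mem, h.card_filter_pos hb_mem hc'_mem,
    h.card_filter_pos hb'_mem hc_mem, h.card_filter_pos hb'_mem hc'_mem, ?_, ?_, ?_, ?_,
    h.filter_map_prodMk hb hc⟩
  · exact (sum_pair hc).symm.trans (h.sum_card_filter_left hb_mem)
  · exact (sum_pair hc).symm.trans (h.sum_card_filter_left hb'_mem)
  · exact (sum_pair hb).symm.trans (h.sum_card_filter_right hc_mem)
  · exact (sum_pair hb).symm.trans (h.sum_card_filter_right hc'_mem)

lemma IsRegularC4.disjoint_of_ne {X' : Finset β} {Z' : Finset γ} (h : IsRegularC4 p q r E X Z)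
    (h' : IsRegularC4 p q r E X' Z') (h_ne : (X, Z) ≠ (X', Z')) :
    Disjoint X X' ∧ Disjoint Z Z' := by
  have hX_self : ¬Disjoint X X := disjoint_self_iff_empty X |>.not.2 h.left_nonempty.ne_empty
  have hZ_self : ¬Disjoint Z Z := disjoint_self_iff_empty Z |>.not.2 h.swap.left_nonempty.ne_empty
  constructor <;> by_contra h_meet
  · obtain rfl := h.right_eq h' h_meet
    exact h_ne (congrArg (·, Z) (h.left_eq h' hZ_self))
  · obtain rfl := h.left_eq h' h_meet
    exact h_ne (congrArg (X, ·) (h.right_eq h' hX_self))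

lemma exists_quadruples_of_c4Components (p : ι → β) (q : ι → γ) (r : ℕ) (E : Finset ι) :
    ∃ T : Finset (β × β × γ × γ), #T = #(c4Components p q r E) ∧
      (∀ t ∈ T, IsRegularC4 p q r E {t.1, t.2.1} {t.2.2.1, t.2.2.2}) ∧
      ∀ t ∈ T, ∀ t' ∈ T, t ≠ t' → Disjoint ({t.1, t.2.1} : Finset β) {t'.1, t'.2.1} ∧
        Disjoint ({t.2.2.1, t.2.2.2} : Finset γ) {t'.2.2.1, t'.2.2.2} := by
  let verts (t : β × β × γ × γ) : Finset β × Finset γ := ({t.1, t.2.1}, {t.2.2.1, t.2.2.2})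
  have h_surj : Set.SurjOn verts Set.univ (c4Components p q r E) := by
    rintro ⟨X, Z⟩ hC
    have h : IsRegularC4 p q r E X Z := mem_c4Components.1 hC
    obtain ⟨b, b', -, rfl⟩ := card_eq_two.1 h.card_left
    obtain ⟨c, c', -, rfl⟩ := card_eq_two.1 h.card_right
    exact ⟨(b, b', c, c'), trivial, rfl⟩
  obtain ⟨T, -, h_inj, hT⟩ := exists_subset_injOn_image_eq_of_surjOn _ _ h_surj
  have h_C4 : ∀ t ∈ T, IsRegularC4 p q r E (verts t).1 (verts t).2 := fun t ht =>
    mem_c4Components.1 (hT ▸ mem_image_of_mem verts ht)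
  exact ⟨T, hT ▸ (card_image_of_injOn h_inj).symm, h_C4, fun t ht t' ht' h_ne =>
    (h_C4 t ht).disjoint_of_ne (h_C4 t' ht') fun h_eq => h_ne (h_inj ht ht' h_eq)⟩

end Link

section Enumeration

variable {ι α β γ δ : Type*} [Fintype ι]

lemma exists_eq_map_univ_val (s : Multiset δ) :
    ∃ (m : ℕ) (g : Fin m → δ), s = (univ : Finset (Fin m)).val.map g := by
  induction s using Quotient.inductionOn with
  | h l => exact ⟨l.length, l.get, by simp [Fin.univ_val_map]⟩

lemma card_filter_map_univ_val (g : ι → δ) (P : δ → Prop) [DecidablePred P] :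
    (((univ : Finset ι).val.map g).filter P).card = #{e | P (g e)} := by
  rw [Multiset.filter_map, Multiset.card_map]
  rfl

lemma card_le_matchNum [Finite α] {g : ι → α × β × γ} {τ : Finset ι}
    (hτ : IsEdgeMatching (fun e => (g e).2.1) (fun e => (g e).2.2) τ)
    (h_inj : Set.InjOn (fun e => (g e).1) τ) :
    #τ ≤ matchNum ((univ : Finset ι).val.map g) := by
  classical
  have := Fintype.ofFinite α
  refine le_csSup ⟨Fintype.card α, ?_⟩ ⟨τ.image g, ⟨fun e he => ?_, fun e he f hf h_ne => ?_⟩,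
    card_image_of_injOn fun e he f hf h => h_inj he hf (congrArg Prod.fst h)⟩
  · rintro _ ⟨M, hM, rfl⟩
    refine card_le_card_of_injOn Prod.fst (t := univ) (fun _ _ => mem_coe.2 (mem_univ _)) ?_
    intro e he f hf h
    by_contra h_ne
    exact (hM.2 e he f hf h_ne).1 h
  · obtain ⟨i, -, rfl⟩ := mem_image.1 he
    exact Multiset.mem_map_of_mem g (mem_univ i)
  · obtain ⟨i, hi, rfl⟩ := mem_image.1 he
    obtain ⟨j, hj, rfl⟩ := mem_image.1 hf
    exact ⟨fun h => h_ne (congrArg g (h_inj hi hj h)),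
      fun h => h_ne (congrArg g (hτ.left hi hj h)), fun h => h_ne (congrArg g (hτ.right hi hj h))⟩

end Enumeration

end Development

/-- If every vertex of the class `α` (of size `n`) has degree at least `r ≥ 2`, every
vertex of the other two classes has degree at most `r`, and `ν(H) ≤ (1 + ε)·n/2`, then
the link of `α` contains at least `(1 − (6r − 7)ε)·n/2` connected components that are
`r`-regular `C₄`'s. -/
theorem stmt4 {α β γ : Type*} [Fintype α]
    [DecidableEq α] [DecidableEq β] [DecidableEq γ]
    (H : Multiset (α × β × γ)) (n r : ℕ) (hr : 2 ≤ r) (ε : ℝ) (hε : 0 ≤ ε)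
    (hA : Fintype.card α = n)
    (hdA : ∀ a : α, r ≤ deg1 H a)
    (hdB : ∀ b : β, deg2 H b ≤ r)
    (hdC : ∀ c : γ, deg3 H c ≤ r)
    (hnu : (matchNum H : ℝ) ≤ (1 + ε) * n / 2) :
    ∃ T : Finset (β × β × γ × γ),
      (∀ t ∈ T, IsRegC4Component (linkA H) r t.1 t.2.1 t.2.2.1 t.2.2.2) ∧
      (∀ t ∈ T, ∀ t' ∈ T, t ≠ t' →
        ({t.1, t.2.1} : Finset β) ∩ {t'.1, t'.2.1} = ∅ ∧
        ({t.2.2.1, t.2.2.2} : Finset γ) ∩ {t'.2.2.1, t'.2.2.2} = ∅) ∧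
      (1 - (6 * (r : ℝ) - 7) * ε) * n / 2 ≤ (T.card : ℝ) := by
  obtain ⟨ρ, rfl⟩ := Nat.exists_eq_add_of_le' hr
  obtain ⟨m, g, rfl⟩ := exists_eq_map_univ_val H
  simp only [deg1, deg2, deg3, card_filter_map_univ_val] at hdA hdB hdC
  have h_card := card_le_card_c4Components_add hdA hdB hdC
    fun τ _ hτ h_inj => card_le_matchNum hτ h_inj
  obtain ⟨T, hT_card, hT, hT_disjoint⟩ := exists_quadruples_of_c4Components
    (fun e => (g e).2.1) (fun e => (g e).2.2) (ρ + 2) Finset.univ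
  refine ⟨T, fun t ht => ?_, fun t ht t' ht' h_ne => ?_, ?_⟩
  · rw [linkA, Multiset.map_map]
    exact (hT t ht).isRegC4Component
  · simpa only [Finset.disjoint_iff_inter_eq_empty] using hT_disjoint t ht t' ht' h_ne
  · rw [← hT_card, hA] at h_card
    have h_card' :
        (3 * ρ + 3 : ℝ) * n ≤ T.card + (6 * ρ + 5) * matchNum (Finset.univ.val.map g) := by
      exact_mod_cast h_card
    have h_nu := mul_le_mul_of_nonneg_left hnu (by positivity : (0 : ℝ) ≤ 6 * ρ + 5)
    push_cast
    linarith

end Tripartite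
end

section
/- Let H be a 3-partite 3-graph, let A be one of its vertex classes, and suppose every vertex in A has degree at most r. If an r-regular C4 in the link lk A does not host two disjoint edges of H, then the edges of H that it hosts form a copy of (r/2)·F, where F is the truncated Fano plane. -/
namespace Hosted

/-!
In an `r`-regular `C₄` opposite sides have equal multiplicity. Two edges of `H` projecting to
opposite sides can only meet in the class `α`, so if no two hosted edges are disjoint then all the
edges over one pair of opposite sides pass through a single vertex of `α`, its apex. The degree
bound at the apex shows that no side has multiplicity more than `r / 2`; since adjacent sides have
total multiplicity `r`, each side has multiplicity exactly `r / 2`. The two apexes are distinct, as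
otherwise all `2r` hosted edges would pass through one vertex.
-/

section

open Finset

variable {α β γ E : Type*}

lemma card_filter_or_of_disjoint {S : Finset E} {p q : E → Prop} [DecidablePred p]
    [DecidablePred q] (hpq : ∀ e ∈ S, p e → ¬ q e) :
    #{e ∈ S | p e ∨ q e} = #{e ∈ S | p e} + #{e ∈ S | q e} := by
  classical
  rw [filter_or, card_union_of_disjoint (disjoint_filter.2 hpq)]

/-- The edges of the bipartite multigraph `g` indexed by `S` form an `r`-regular `C₄` with vertex
classes `{b, b'}` and `{c, c'}`. A bipartite multigraph is encoded, like a 3-graph, by the map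
sending each edge index to the pair of its ends. -/
structure IsRegularC4 [DecidableEq β] [DecidableEq γ] (g : E → β × γ) (S : Finset E) (r : ℕ)
    (b b' : β) (c c' : γ) : Prop where
  left_ne : b ≠ b'
  right_ne : c ≠ c'
  ends_mem : ∀ e ∈ S, ((g e).1 = b ∨ (g e).1 = b') ∧ ((g e).2 = c ∨ (g e).2 = c')
  exists_left_right : ∃ e ∈ S, (g e).1 = b ∧ (g e).2 = c
  exists_left_right' : ∃ e ∈ S, (g e).1 = b ∧ (g e).2 = c'
  exists_left'_right : ∃ e ∈ S, (g e).1 = b' ∧ (g e).2 = c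
  exists_left'_right' : ∃ e ∈ S, (g e).1 = b' ∧ (g e).2 = c'
  degree_left : #{e ∈ S | (g e).1 = b} = r
  degree_left' : #{e ∈ S | (g e).1 = b'} = r
  degree_right : #{e ∈ S | (g e).2 = c} = r
  degree_right' : #{e ∈ S | (g e).2 = c'} = r

namespace IsRegularC4

variable [DecidableEq β] [DecidableEq γ] {g : E → β × γ} {S : Finset E} {r : ℕ} {b b' : β}
  {c c' : γ}

lemma swap_right (h : IsRegularC4 g S r b b' c c') : IsRegularC4 g S r b b' c' c where
  left_ne := h.left_ne
  right_ne := h.right_ne.symm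
  ends_mem e he := (h.ends_mem e he).imp_right Or.symm
  exists_left_right := h.exists_left_right'
  exists_left_right' := h.exists_left_right
  exists_left'_right := h.exists_left'_right'
  exists_left'_right' := h.exists_left'_right
  degree_left := h.degree_left
  degree_left' := h.degree_left'
  degree_right := h.degree_right'
  degree_right' := h.degree_right

lemma eq_side (h : IsRegularC4 g S r b b' c c') {e : E} (he : e ∈ S) :
    g e = (b, c) ∨ g e = (b', c') ∨ g e = (b, c') ∨ g e = (b', c) := by
  simp only [Prod.ext_iff]
  have := h.ends_mem e he
  tauto

lemma pos (h : IsRegularC4 g S r b b' c c') : 0 < r := by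
  obtain ⟨e, he, hb, -⟩ := h.exists_left_right
  rw [← h.degree_left]
  exact card_pos.2 ⟨e, mem_filter.2 ⟨he, hb⟩⟩

lemma card_eq (h : IsRegularC4 g S r b b' c c') : #S = 2 * r :=
  calc #S = #{e ∈ S | (g e).1 = b ∨ (g e).1 = b'} := by
        rw [filter_true_of_mem fun e he ↦ (h.ends_mem e he).1]
    _ = #{e ∈ S | (g e).1 = b} + #{e ∈ S | (g e).1 = b'} :=
        card_filter_or_of_disjoint fun _ _ hb hb' ↦ h.left_ne (hb.symm.trans hb')
    _ = 2 * r := by rw [h.degree_left, h.degree_left', two_mul]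

lemma card_side_add_card_side_left (h : IsRegularC4 g S r b b' c c') :
    #{e ∈ S | g e = (b, c)} + #{e ∈ S | g e = (b, c')} = r := by
  have hside : ∀ e ∈ S, (g e).1 = b ↔ g e = (b, c) ∨ g e = (b, c') := fun e he ↦ by
    simp only [Prod.ext_iff, ← and_or_left, (h.ends_mem e he).2, and_true]
  rw [← h.degree_left, filter_congr hside, card_filter_or_of_disjoint]
  exact fun e _ hc hc' ↦ h.right_ne (congrArg Prod.snd (hc.symm.trans hc'))

lemma card_side_add_card_side_right (h : IsRegularC4 g S r b b' c c') :
    #{e ∈ S | g e = (b, c)} + #{e ∈ S | g e = (b', c)} = r := by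
  have hside : ∀ e ∈ S, (g e).2 = c ↔ g e = (b, c) ∨ g e = (b', c) := fun e he ↦ by
    simp only [Prod.ext_iff, ← or_and_right, (h.ends_mem e he).1, true_and]
  rw [← h.degree_right, filter_congr hside, card_filter_or_of_disjoint]
  exact fun e _ hb hb' ↦ h.left_ne (congrArg Prod.fst (hb.symm.trans hb'))

lemma card_side_eq_card_opposite (h : IsRegularC4 g S r b b' c c') :
    #{e ∈ S | g e = (b, c)} = #{e ∈ S | g e = (b', c')} := by
  have hleft := h.card_side_add_card_side_left
  have hright := h.swap_right.card_side_add_card_side_right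
  omega

end IsRegularC4

/-- The ambient bipartite multigraph of the link of the first vertex class of the 3-graph `f`, with
the same edge indices as `f`. -/
abbrev link (f : E → α × β × γ) : E → β × γ := fun e ↦ (f e).2

/-- Two of the edges of the 3-graph `f` indexed by `S` are disjoint. -/
def HostsDisjointPair (f : E → α × β × γ) (S : Finset E) : Prop :=
  ∃ e₁ ∈ S, ∃ e₂ ∈ S,
    (f e₁).1 ≠ (f e₂).1 ∧ (f e₁).2.1 ≠ (f e₂).2.1 ∧ (f e₁).2.2 ≠ (f e₂).2.2

/-- The edges of the 3-graph `f` indexed by `S` form a copy of `s • F`, where `F` is the truncated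
Fano plane. -/
def IsTruncatedFano [DecidableEq α] [DecidableEq β] [DecidableEq γ] (f : E → α × β × γ)
    (S : Finset E) (s : ℕ) : Prop :=
  ∃ (x₁ y₁ : α) (x₂ y₂ : β) (x₃ y₃ : γ),
    x₁ ≠ y₁ ∧ x₂ ≠ y₂ ∧ x₃ ≠ y₃ ∧
    (∀ e ∈ S, f e = (x₁, x₂, x₃) ∨ f e = (x₁, y₂, y₃) ∨
      f e = (y₁, x₂, y₃) ∨ f e = (y₁, y₂, x₃)) ∧
    #{e ∈ S | f e = (x₁, x₂, x₃)} = s ∧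
    #{e ∈ S | f e = (x₁, y₂, y₃)} = s ∧
    #{e ∈ S | f e = (y₁, x₂, y₃)} = s ∧
    #{e ∈ S | f e = (y₁, y₂, x₃)} = s

/-- Every edge of the 3-graph `f` indexed by `S` whose link edge is `(b, c)` or `(b', c')` passes
through the vertex `x`. In a `C₄` these are the edges over a pair of opposite sides. -/
def IsApex (f : E → α × β × γ) (S : Finset E) (b b' : β) (c c' : γ) (x : α) : Prop :=
  ∀ e ∈ S, link f e = (b, c) ∨ link f e = (b', c') → (f e).1 = x

variable {f : E → α × β × γ} {S : Finset E} {r : ℕ} {b b' : β} {c c' : γ} {x y : α}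

lemma IsApex.swap (hx : IsApex f S b b' c c' x) : IsApex f S b' b c' c x :=
  fun e he hside ↦ hx e he hside.symm

variable [DecidableEq β] [DecidableEq γ]

lemma IsRegularC4.exists_isApex (h : IsRegularC4 (link f) S r b b' c c')
    (hS : ¬ HostsDisjointPair f S) : ∃ x, IsApex f S b b' c c' x := by
  have meet : ∀ e ∈ S, ∀ e' ∈ S, link f e = (b, c) → link f e' = (b', c') →
      (f e).1 = (f e').1 := by
    intro e he e' he' hbc hbc'
    by_contra hne
    refine hS ⟨e, he, e', he', hne, ?_⟩
    simp only [hbc, hbc', ne_eq, h.left_ne, h.right_ne, not_false_eq_true, and_self]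
  obtain ⟨e₁, he₁, hb₁, hc₁⟩ := h.exists_left_right
  obtain ⟨e₂, he₂, hb₂, hc₂⟩ := h.exists_left'_right'
  refine ⟨(f e₂).1, ?_⟩
  rintro e he (hbc | hbc')
  · exact meet e he e₂ he₂ hbc (Prod.ext hb₂ hc₂)
  · rw [← meet e₁ he₁ e he (Prod.ext hb₁ hc₁) hbc']
    exact meet e₁ he₁ e₂ he₂ (Prod.ext hb₁ hc₁) (Prod.ext hb₂ hc₂)

namespace IsApex

variable [DecidableEq α]

lemma card_filter_eq (hx : IsApex f S b b' c c' x) :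
    #{e ∈ S | f e = (x, b, c)} = #{e ∈ S | link f e = (b, c)} :=
  congrArg card <| filter_congr fun e he ↦
    ⟨congrArg Prod.snd, fun hside ↦ Prod.ext (hx e he (.inl hside)) hside⟩

lemma two_mul_card_side_le (hx : IsApex f S b b' c c' x)
    (h : IsRegularC4 (link f) S r b b' c c') (hdeg : #{e ∈ S | (f e).1 = x} ≤ r) :
    2 * #{e ∈ S | link f e = (b, c)} ≤ r :=
  calc 2 * #{e ∈ S | link f e = (b, c)}
      = #{e ∈ S | link f e = (b, c)} + #{e ∈ S | link f e = (b', c')} := by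
        rw [two_mul, ← h.card_side_eq_card_opposite]
    _ = #{e ∈ S | link f e = (b, c) ∨ link f e = (b', c')} :=
        (card_filter_or_of_disjoint fun _ _ hbc hbc' ↦
          h.left_ne (congrArg Prod.fst (hbc.symm.trans hbc'))).symm
    _ ≤ #{e ∈ S | (f e).1 = x} := card_le_card fun e ↦ by
        simpa only [mem_filter] using fun ⟨he, hside⟩ ↦ ⟨he, hx e he hside⟩
    _ ≤ r := hdeg

lemma ne (hx : IsApex f S b b' c c' x) (hy : IsApex f S b b' c' c y)
    (h : IsRegularC4 (link f) S r b b' c c') (hdeg : #{e ∈ S | (f e).1 = x} ≤ r) : x ≠ y := by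
  rintro rfl
  have hall : ∀ e ∈ S, (f e).1 = x := fun e he ↦
    (or_assoc.2 (h.eq_side he)).elim (hx e he) (hy e he)
  rw [filter_true_of_mem hall, h.card_eq] at hdeg
  have := h.pos
  omega

end IsApex

theorem stmt5_general [DecidableEq α] (h : IsRegularC4 (link f) S r b b' c c')
    (hdeg : ∀ a, #{e ∈ S | (f e).1 = a} ≤ r) (hS : ¬ HostsDisjointPair f S) :
    ∃ s, 2 * s = r ∧ IsTruncatedFano f S s := by
  obtain ⟨x, hx⟩ := h.exists_isApex hS
  obtain ⟨y, hy⟩ := h.swap_right.exists_isApex hS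
  have hx_le := hx.two_mul_card_side_le h (hdeg x)
  have hy_le := hy.two_mul_card_side_le h.swap_right (hdeg y)
  have hadd := h.card_side_add_card_side_left
  have hx_opp := h.card_side_eq_card_opposite
  have hy_opp := h.swap_right.card_side_eq_card_opposite
  refine ⟨#{e ∈ S | link f e = (b, c)}, by omega, x, y, b, b', c, c', hx.ne hy h (hdeg x),
    h.left_ne, h.right_ne, fun e he ↦ ?_, hx.card_filter_eq, ?_, ?_, ?_⟩
  · rcases h.eq_side he with hs | hs | hs | hs
    · exact .inl (Prod.ext (hx e he (.inl hs)) hs)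
    · exact .inr (.inl (Prod.ext (hx e he (.inr hs)) hs))
    · exact .inr (.inr (.inl (Prod.ext (hy e he (.inl hs)) hs)))
    · exact .inr (.inr (.inr (Prod.ext (hy e he (.inr hs)) hs)))
  · rw [hx.swap.card_filter_eq, hx_opp]
  · rw [hy.card_filter_eq]; omega
  · rw [hy.swap.card_filter_eq]; omega

end

/-- A 3-partite 3-graph is given by an index type `E` of edges (so parallel edges are
allowed) and a map `f` assigning to each edge index its triple of vertices, one in each
of the three vertex classes `α`, `β`, `γ`.

In the link of the first class (the bipartite multigraph on `β` and `γ` whose edges are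
the projections of the edges of `H`), a sub-multigraph is a subset `S` of edge indices;
`S` *hosts* exactly the edges of `H` indexed by `S`.

Statement: let every vertex of the class `α` have degree at most `r`, and let
`S` together with `b b' : β`, `c c' : γ` be an `r`-regular `C₄` in the link of `α`
(all link-edges of `S` join `{b, b'}` to `{c, c'}`, all four sides of the 4-cycle are
present, and each of the four vertices has degree exactly `r` in `S`). If `S` does not
host two disjoint edges of `H`, then the edges hosted by `S` form a copy of `(r/2) • F`,
where `F` is the truncated Fano plane. -/
theorem stmt5 {α β γ E : Type*} [DecidableEq α] [DecidableEq β] [DecidableEq γ]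
    [Fintype E] [DecidableEq E]
    (f : E → α × β × γ) (r : ℕ)
    (hdA : ∀ a : α, (Finset.univ.filter fun e => (f e).1 = a).card ≤ r)
    (S : Finset E) (b b' : β) (c c' : γ)
    (hbb : b ≠ b') (hcc : c ≠ c')
    (hin : ∀ e ∈ S, ((f e).2.1 = b ∨ (f e).2.1 = b') ∧ ((f e).2.2 = c ∨ (f e).2.2 = c'))
    (hside1 : ∃ e ∈ S, (f e).2.1 = b ∧ (f e).2.2 = c)
    (hside2 : ∃ e ∈ S, (f e).2.1 = b ∧ (f e).2.2 = c')
    (hside3 : ∃ e ∈ S, (f e).2.1 = b' ∧ (f e).2.2 = c)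
    (hside4 : ∃ e ∈ S, (f e).2.1 = b' ∧ (f e).2.2 = c')
    (hdb : (S.filter fun e => (f e).2.1 = b).card = r)
    (hdb' : (S.filter fun e => (f e).2.1 = b').card = r)
    (hdc : (S.filter fun e => (f e).2.2 = c).card = r)
    (hdc' : (S.filter fun e => (f e).2.2 = c').card = r)
    (hnodisj : ¬ ∃ e1 ∈ S, ∃ e2 ∈ S,
      (f e1).1 ≠ (f e2).1 ∧ (f e1).2.1 ≠ (f e2).2.1 ∧ (f e1).2.2 ≠ (f e2).2.2) :
    ∃ s : ℕ, 2 * s = r ∧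
    ∃ (x1 y1 : α) (x2 y2 : β) (x3 y3 : γ),
      x1 ≠ y1 ∧ x2 ≠ y2 ∧ x3 ≠ y3 ∧
      (∀ e ∈ S, f e = (x1, x2, x3) ∨ f e = (x1, y2, y3) ∨
        f e = (y1, x2, y3) ∨ f e = (y1, y2, x3)) ∧
      (S.filter fun e => f e = (x1, x2, x3)).card = s ∧
      (S.filter fun e => f e = (x1, y2, y3)).card = s ∧
      (S.filter fun e => f e = (y1, x2, y3)).card = s ∧
      (S.filter fun e => f e = (y1, y2, x3)).card = s :=
  stmt5_general ⟨hbb, hcc, hin, hside1, hside2, hside3, hside4, hdb, hdb', hdc, hdc'⟩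
    (fun a ↦ (Finset.card_le_card (Finset.filter_subset_filter _ S.subset_univ)).trans (hdA a))
    hnodisj

end Hosted
end

section
/- Let H be a 3-partite 3-graph with vertex classes V1, V2, V3. Suppose K is an r-regular C4 component of the link of one of the vertex classes, K hosts two disjoint edges of H, and every vertex of K belongs to an r-regular C4 component of the link of each of the other two vertex classes. Then K belongs to a connected component of H that either (1) has exactly 2 vertices in each vertex class and contains a matching of size 2, or (2) has exactly 4 vertices in each vertex class and contains a matching of size 4. In particular, K belongs to a component of H having a perfect matching. -/
namespace Links

variable {V : Fin 3 → Type} {E : Type}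

/-- A 3-partite 3-graph is given by the three vertex classes `V 0`, `V 1`, `V 2`, an index
type `E` of edges (so parallel edges are allowed) and a map `ed` assigning to each edge
index its vertex in each class. The degree of a vertex `v : V i` is the number of edges
containing it. -/
def deg [∀ i, DecidableEq (V i)] [Fintype E] (ed : E → ∀ i, V i) (i : Fin 3) (v : V i) :
    ℕ :=
  (Finset.univ.filter fun e => ed e i = v).card

/-- `b, b' : V j` and `c, c' : V k` are the vertices of a connected component of the link
of the class `V i` (the bipartite multigraph on the other two classes `V j`, `V k` whose
edges are the projections of the edges of `H`) which is an `r`-regular `C₄`: a cycle of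
length 4 together with edges parallel to the edges of the cycle, such that every vertex
has degree exactly `r`.  (No edge leaves `{b, b'} ∪ {c, c'}`, all four sides of the
4-cycle are present, and all four vertices have degree exactly `r`.) -/
def IsC4Comp [∀ i, DecidableEq (V i)] [Fintype E] (ed : E → ∀ i, V i) (r : ℕ)
    (i j k : Fin 3) (b b' : V j) (c c' : V k) : Prop :=
  i ≠ j ∧ i ≠ k ∧ j ≠ k ∧ b ≠ b' ∧ c ≠ c' ∧
  (∀ e : E, (ed e j = b ∨ ed e j = b' ∨ ed e k = c ∨ ed e k = c') →
    (ed e j = b ∨ ed e j = b') ∧ (ed e k = c ∨ ed e k = c')) ∧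
  (∃ e : E, ed e j = b ∧ ed e k = c) ∧ (∃ e : E, ed e j = b ∧ ed e k = c') ∧
  (∃ e : E, ed e j = b' ∧ ed e k = c) ∧ (∃ e : E, ed e j = b' ∧ ed e k = c') ∧
  deg ed j b = r ∧ deg ed j b' = r ∧ deg ed k c = r ∧ deg ed k c' = r

/-- The vertex `v : V l` belongs to a connected component of the link of the class `V m`
which is an `r`-regular `C₄`. -/
def InC4Comp [∀ i, DecidableEq (V i)] [Fintype E] (ed : E → ∀ i, V i) (r : ℕ)
    (m : Fin 3) {l : Fin 3} (v : V l) : Prop :=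
  ∃ (k : Fin 3) (b' : V l) (c c' : V k), IsC4Comp ed r m l k v b' c c'

/-- Two vertices of the 3-partite 3-graph (elements of the sigma type `Σ i, V i`) are
connected if they are joined by a path of edges; `hconn ed x y` says `y` lies in the
connected component of `x`. -/
def hconn (ed : E → ∀ i, V i) : (Σ i, V i) → (Σ i, V i) → Prop :=
  Relation.ReflTransGen fun x y => ∃ e : E, ed e x.1 = x.2 ∧ ed e y.1 = y.2

/-!
Write `B, A` for the sides of the `C₄` of `lk V k` through `b`, and `B', A'` for those through
`b'`; likewise `C, Z` and `C', Z'` in `lk V j` for `c` and `c'`. Components of one link with a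
common vertex coincide, so each of these two pairs is either equal or disjoint.

If `B = B'`, then `{b, b'}` is a side both of `K` and of a component of `lk V k`, so `H` has a
component with two vertices in each class, and two disjoint edges hosted by `K` cover it. The case
`C = C'` is symmetric. Otherwise the four sides of `K` lift to edges whose vertices in `V i` are
distinct and form `A ∪ A' = Z ∪ Z'`, so `B ∪ B'`, `A ∪ A'` and `C ∪ C'` are the classes of a
component. The edges over `bc` and `b'c'` have to be completed to a matching: the vertex in `V i` of
the edge over `bc'` lies in an edge avoiding `K`, whose other vertices are the partners of `b` and
`c'`, and the same holds for `b'c`.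
-/

/-- A connected component of a bipartite multigraph whose underlying simple graph is a cycle of
length 4, given by its two sides `S` and `T`. The multigraph is encoded by the maps `f` and `g`
sending an edge to its two ends. Unlike in `IsC4Comp`, the degrees are arbitrary. -/
structure IsFourCycleComp {F X Y : Type*} (f : F → X) (g : F → Y) (S : Set X) (T : Set Y) :
    Prop where
  ncard_left : S.ncard = 2
  ncard_right : T.ncard = 2
  mem_iff : ∀ e, f e ∈ S ↔ g e ∈ T
  exists_edge : ∀ s ∈ S, ∀ t ∈ T, ∃ e, f e = s ∧ g e = t

/-- `M` is a perfect matching of the connected component of the vertex `x`: its edges are pairwise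
disjoint, lie in that component and cover it. -/
structure IsComponentPerfectMatching (ed : E → ∀ i, V i) (x : Σ i, V i) (M : Finset E) :
    Prop where
  ne : ∀ e₁ ∈ M, ∀ e₂ ∈ M, e₁ ≠ e₂ → ∀ m, ed e₁ m ≠ ed e₂ m
  hconn_of_mem : ∀ e ∈ M, ∀ m, hconn ed x ⟨m, ed e m⟩
  exists_mem : ∀ y, hconn ed x y → ∃ e ∈ M, ed e y.1 = y.2

/-- The vertex sets `S m` of the classes `V m` together form a union of connected components. -/
def IsSaturated (ed : E → ∀ i, V i) (S : ∀ m, Set (V m)) : Prop :=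
  ∀ e m n, ed e m ∈ S m → ed e n ∈ S n

section SmallSets

variable {α β : Type*}

theorem eq_pair_of_ncard_eq_two {S : Set α} {a b : α} (hS : S.ncard = 2) (ha : a ∈ S)
    (hb : b ∈ S) (hab : a ≠ b) : S = {a, b} :=
  (Set.eq_of_subset_of_ncard_le (Set.pair_subset ha hb) (by rw [hS, Set.ncard_pair hab])
    (Set.finite_of_ncard_pos (by omega))).symm

theorem ne_of_ncard_pair_eq_two {a b : α} (h : ({a, b} : Set α).ncard = 2) : a ≠ b := by
  rintro rfl
  simp at h

theorem image_eq_of_subset_of_card_le {f : α → β} {M : Finset α} {S : Set β}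
    (hS : S ⊆ f '' M) (hM : M.card ≤ S.ncard) : f '' M = S :=
  (Set.eq_of_subset_of_ncard_le hS
    ((Set.ncard_image_le M.finite_toSet).trans (by rwa [Set.ncard_coe_finset]))
    (M.finite_toSet.image f)).symm

end SmallSets

theorem forall_fin_three_iff {i j k : Fin 3} (hij : i ≠ j) (hik : i ≠ k) (hjk : j ≠ k)
    {P : Fin 3 → Prop} : (∀ m, P m) ↔ P i ∧ P j ∧ P k := by
  refine ⟨fun h => ⟨h i, h j, h k⟩, fun ⟨hi, hj, hk⟩ m => ?_⟩
  obtain rfl | rfl | rfl : m = i ∨ m = j ∨ m = k := by omega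
  exacts [hi, hj, hk]

namespace IsFourCycleComp

section Bipartite

variable {F X Y : Type*} {f : F → X} {g : F → Y} {S S' : Set X} {T T' : Set Y}

theorem symm (h : IsFourCycleComp f g S T) : IsFourCycleComp g f T S where
  ncard_left := h.ncard_right
  ncard_right := h.ncard_left
  mem_iff e := (h.mem_iff e).symm
  exists_edge t ht s hs := (h.exists_edge s hs t ht).imp fun _ => And.symm

theorem preimage_eq (h : IsFourCycleComp f g S T) : f ⁻¹' S = g ⁻¹' T :=
  Set.ext h.mem_iff

theorem image_fiber_eq (h : IsFourCycleComp f g S T) {x : X} (hx : x ∈ S) :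
    g '' (f ⁻¹' {x}) = T := by
  ext y
  constructor
  · rintro ⟨e, rfl, rfl⟩
    exact (h.mem_iff e).1 hx
  · exact h.exists_edge x hx y

theorem right_eq_of_mem (h : IsFourCycleComp f g S T) (h' : IsFourCycleComp f g S' T') {x : X}
    (hx : x ∈ S) (hx' : x ∈ S') : T = T' :=
  (h.image_fiber_eq hx).symm.trans (h'.image_fiber_eq hx')

theorem left_eq_of_right_eq (h : IsFourCycleComp f g S T) (h' : IsFourCycleComp f g S' T) :
    S = S' := by
  obtain ⟨y, hy⟩ := Set.nonempty_of_ncard_ne_zero (h.ncard_right.trans_ne two_ne_zero)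
  exact h.symm.right_eq_of_mem h'.symm hy hy

theorem disjoint_left (h : IsFourCycleComp f g S T) (h' : IsFourCycleComp f g S' T')
    (hS : S ≠ S') : Disjoint S S' := by
  refine Set.disjoint_left.2 fun x hx hx' => hS ?_
  obtain rfl := h.right_eq_of_mem h' hx hx'
  exact h.left_eq_of_right_eq h'

theorem disjoint_right (h : IsFourCycleComp f g S T) (h' : IsFourCycleComp f g S' T')
    (hS : S ≠ S') : Disjoint T T' :=
  h.symm.disjoint_left h'.symm (by rintro rfl; exact hS (h.left_eq_of_right_eq h'))

theorem ncard_union_left (h : IsFourCycleComp f g S T) (h' : IsFourCycleComp f g S' T')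
    (hS : S ≠ S') : (S ∪ S').ncard = 4 := by
  rw [Set.ncard_union_eq (h.disjoint_left h' hS)
    (Set.finite_of_ncard_pos (by simp only [h.ncard_left, Nat.ofNat_pos]))
    (Set.finite_of_ncard_pos (by simp only [h'.ncard_left, Nat.ofNat_pos])),
    h.ncard_left, h'.ncard_left]

theorem ncard_union_right (h : IsFourCycleComp f g S T) (h' : IsFourCycleComp f g S' T')
    (hS : S ≠ S') : (T ∪ T').ncard = 4 :=
  h.symm.ncard_union_left h'.symm (by rintro rfl; exact hS (h.left_eq_of_right_eq h'))

theorem mem_union_iff (h : IsFourCycleComp f g S T) (h' : IsFourCycleComp f g S' T') (e : F) :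
    f e ∈ S ∪ S' ↔ g e ∈ T ∪ T' :=
  or_congr (h.mem_iff e) (h'.mem_iff e)

end Bipartite

section Tripartite

variable {F X Y Z : Type*} {f : F → X} {g : F → Y} {h : F → Z}

theorem right_eq_pair {B : Set X} {C C' : Set Y} {A P P' : Set Z}
    (hBA : IsFourCycleComp f h B A) (hCP : IsFourCycleComp g h C P)
    (hCP' : IsFourCycleComp g h C' P') (hC : C ≠ C') {p q : F} (hpB : f p ∈ B) (hqB : f q ∈ B)
    (hpC : g p ∈ C) (hqC' : g q ∈ C') : A = {h p, h q} :=
  eq_pair_of_ncard_eq_two hBA.ncard_right ((hBA.mem_iff p).1 hpB) ((hBA.mem_iff q).1 hqB)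
    ((hCP.disjoint_right hCP' hC).ne_of_mem ((hCP.mem_iff p).1 hpC) ((hCP'.mem_iff q).1 hqC'))

theorem right_union_eq_image {b b' : X} {B B' : Set X} {A A' : Set Z}
    (hBA : IsFourCycleComp f h B A) (hb : b ∈ B) (hBA' : IsFourCycleComp f h B' A')
    (hb' : b' ∈ B') : A ∪ A' = h '' (f ⁻¹' {b, b'}) := by
  rw [← hBA.image_fiber_eq hb, ← hBA'.image_fiber_eq hb', ← Set.image_union,
    ← Set.preimage_union, Set.singleton_union]

theorem exists_edge_eq_pair {S B : Set X} {T C : Set Y} {A P : Set Z}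
    (hK : IsFourCycleComp f g S T) (hBA : IsFourCycleComp f h B A)
    (hCP : IsFourCycleComp g h C P) {q : F} (hqB : f q ∈ B) (hqC : g q ∈ C) (hqT : g q ∈ T)
    (hBS : ∀ x ∈ B, x ∈ S → x = f q) : ∃ e, h e = h q ∧ B = {f q, f e} ∧ C = {g q, g e} := by
  obtain ⟨x, hx, hxq⟩ := Set.exists_ne_of_one_lt_ncard (hBA.ncard_left ▸ one_lt_two) (f q)
  obtain ⟨e, rfl, heq⟩ := hBA.exists_edge x hx (h q) ((hBA.mem_iff q).1 hqB)
  have heT : g e ∉ T := fun he => hxq (hBS _ hx ((hK.mem_iff e).2 he))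
  have heC : g e ∈ C := (hCP.mem_iff e).2 (heq ▸ (hCP.mem_iff q).1 hqC)
  exact ⟨e, heq, eq_pair_of_ncard_eq_two hBA.ncard_left hqB hx hxq.symm,
    eq_pair_of_ncard_eq_two hCP.ncard_left hqC heC (ne_of_mem_of_not_mem hqT heT)⟩

theorem exists_four_edges_covering {b b' : X} {c c' : Y} {B B' : Set X} {C C' : Set Y}
    {A A' P P' : Set Z} (hK : IsFourCycleComp f g {b, b'} {c, c'})
    (hBA : IsFourCycleComp f h B A) (hb : b ∈ B) (hBA' : IsFourCycleComp f h B' A')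
    (hb' : b' ∈ B') (hCP : IsFourCycleComp g h C P) (hc : c ∈ C)
    (hCP' : IsFourCycleComp g h C' P') (hc' : c' ∈ C') (hB : B ≠ B') (hC : C ≠ C') :
    ∃ M : Finset F, M.card ≤ 4 ∧ A ∪ A' ⊆ h '' M ∧ B ∪ B' ⊆ f '' M ∧ C ∪ C' ⊆ g '' M := by
  classical
  obtain ⟨p, rfl, rfl⟩ := hK.exists_edge b (by simp) c (by simp)
  obtain ⟨p', rfl, rfl⟩ := hK.exists_edge b' (by simp) c' (by simp)
  obtain ⟨q, hqb, hqc⟩ := hK.exists_edge (f p) (by simp) (g p') (by simp)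
  obtain ⟨q', hqb', hqc'⟩ := hK.exists_edge (f p') (by simp) (g p) (by simp)
  have hA : A = {h p, h q} := hBA.right_eq_pair hCP hCP' hC hb (by rwa [hqb]) hc (by rwa [hqc])
  have hA' : A' = {h q', h p'} :=
    hBA'.right_eq_pair hCP hCP' hC (by rwa [hqb']) hb' (by rwa [hqc']) hc'
  have hdisj := Set.disjoint_left.1 (hBA.disjoint_left hBA' hB)
  obtain ⟨e, heq, hBe, hCe⟩ := hK.exists_edge_eq_pair hBA hCP' (q := q) (by rwa [hqb])
    (by rwa [hqc]) (by simp [hqc]) fun x hx hxS =>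
      hxS.elim (·.trans hqb.symm) fun hxb => (hdisj hx (hxb ▸ hb')).elim
  obtain ⟨e', heq', hBe', hCe'⟩ := hK.exists_edge_eq_pair hBA' hCP (q := q') (by rwa [hqb'])
    (by rwa [hqc']) (by simp [hqc']) fun x hx hxS =>
      hxS.elim (fun hxb => (hdisj hb (hxb ▸ hx)).elim) (Eq.trans · hqb'.symm)
  refine ⟨{p, p', e, e'}, Finset.card_le_four, ?_, ?_, ?_⟩
  · simp [hA, hA', Set.insert_subset_iff, heq, heq']
  · simp [hBe, hBe', Set.insert_subset_iff, hqb, hqb']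
  · simp [hCe, hCe', Set.insert_subset_iff, hqc, hqc']

end Tripartite

end IsFourCycleComp

section Hypergraph

variable {ed : E → ∀ i, V i} {i j k : Fin 3} {M : Finset E}

theorem IsSaturated.mem_of_hconn {S : ∀ m, Set (V m)} (hS : IsSaturated ed S) {x y : Σ i, V i}
    (hx : x.2 ∈ S x.1) (hxy : hconn ed x y) : y.2 ∈ S y.1 := by
  induction hxy with
  | refl => exact hx
  | tail _ hstep ih =>
    obtain ⟨e, he, he'⟩ := hstep
    exact he' ▸ hS e _ _ (he ▸ ih)

theorem IsComponentPerfectMatching.ncard_component {x : Σ i, V i}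
    (hM : IsComponentPerfectMatching ed x M) (m : Fin 3) :
    {v : V m | hconn ed x ⟨m, v⟩}.ncard = M.card := by
  have himage : {v : V m | hconn ed x ⟨m, v⟩} = (ed · m) '' M :=
    Set.Subset.antisymm (fun v hv => hM.exists_mem ⟨m, v⟩ hv)
      (Set.image_subset_iff.2 fun e he => hM.hconn_of_mem e he m)
  have hinj : Set.InjOn (ed · m) M := fun e₁ h₁ e₂ h₂ h =>
    by_contra fun hne => hM.ne e₁ h₁ e₂ h₂ hne m h
  rw [himage, hinj.ncard_image, Set.ncard_coe_finset]

-- At most `n` edges that cover `n` vertices of a class meet each of them once and nothing else, so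
-- counting makes `M` a matching inside `A`, `B`, `C`.
theorem isComponentPerfectMatching_of_subset_image (hij : i ≠ j) (hik : i ≠ k) (hjk : j ≠ k)
    {A : Set (V i)} {B : Set (V j)} {C : Set (V k)} {n : ℕ} (hA : A.ncard = n)
    (hB : B.ncard = n) (hC : C.ncard = n) (hBA : ∀ e, ed e j ∈ B ↔ ed e i ∈ A)
    (hCA : ∀ e, ed e k ∈ C ↔ ed e i ∈ A) (hM : M.card ≤ n) (hAM : A ⊆ (ed · i) '' M)
    (hBM : B ⊆ (ed · j) '' M) (hCM : C ⊆ (ed · k) '' M) {b : V j} (hb : b ∈ B)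
    (hconnA : ∀ e, ed e i ∈ A → ∀ m, hconn ed ⟨j, b⟩ ⟨m, ed e m⟩) :
    IsComponentPerfectMatching ed ⟨j, b⟩ M ∧ M.card = n := by
  have hAM' : (ed · i) '' M = A := image_eq_of_subset_of_card_le hAM (hA ▸ hM)
  have hBM' : (ed · j) '' M = B := image_eq_of_subset_of_card_le hBM (hB ▸ hM)
  have hCM' : (ed · k) '' M = C := image_eq_of_subset_of_card_le hCM (hC ▸ hM)
  have hcard : M.card = n := hM.antisymm <| by
    rw [← hA, ← hAM', ← Set.ncard_coe_finset M]
    exact Set.ncard_image_le M.finite_toSet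
  have hinj : ∀ m, Set.InjOn (ed · m) M := by
    refine fun m => Set.injOn_of_ncard_image_eq ?_ M.finite_toSet
    rw [Set.ncard_coe_finset, hcard]
    exact (forall_fin_three_iff hij hik hjk (P := fun m => ((ed · m) '' (M : Set E)).ncard = n)).2
      ⟨hAM' ▸ hA, hBM' ▸ hB, hCM' ▸ hC⟩ m
  have hsat : IsSaturated ed fun m => (ed · m) '' M := by
    intro e
    have hmem : ∀ m, ed e m ∈ (ed · m) '' M ↔ ed e i ∈ A :=
      (forall_fin_three_iff hij hik hjk).2 ⟨by rw [hAM'], by rw [hBM', hBA], by rw [hCM', hCA]⟩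
    exact fun m n he => (hmem n).2 ((hmem m).1 he)
  exact ⟨⟨fun e₁ h₁ e₂ h₂ hne m h => hne (hinj m h₁ h₂ h),
    fun e he => hconnA e (hAM' ▸ Set.mem_image_of_mem _ he),
    fun y hy => hsat.mem_of_hconn (hBM hb) hy⟩, hcard⟩

theorem IsFourCycleComp.hconn_of_mem {S : Set (V j)} {T : Set (V k)}
    (hK : IsFourCycleComp (ed · j) (ed · k) S T) {b : V j} (hb : b ∈ S) {e : E}
    (he : ed e k ∈ T) (m : Fin 3) : hconn ed ⟨j, b⟩ ⟨m, ed e m⟩ :=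
  have hbk : hconn ed ⟨j, b⟩ ⟨k, ed e k⟩ := .single (hK.exists_edge b hb _ he)
  hbk.tail ⟨e, rfl, rfl⟩

theorem IsFourCycleComp.exists_perfectMatching_two (hij : i ≠ j) (hik : i ≠ k) (hjk : j ≠ k)
    {A : Set (V i)} {S : Set (V j)} {T : Set (V k)}
    (hK : IsFourCycleComp (ed · j) (ed · k) S T) (hA : A.ncard = 2)
    (hSA : ∀ e, ed e j ∈ S ↔ ed e i ∈ A) {e₁ e₂ : E} (h₁ : ed e₁ j ∈ S) (h₂ : ed e₂ j ∈ S)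
    (hne : ∀ m, ed e₁ m ≠ ed e₂ m) {b : V j} (hb : b ∈ S) :
    ∃ M, IsComponentPerfectMatching ed ⟨j, b⟩ M ∧ M.card = 2 := by
  classical
  have hcover : ∀ {m} {R : Set (V m)}, R.ncard = 2 → ed e₁ m ∈ R → ed e₂ m ∈ R →
      R ⊆ (ed · m) '' ({e₁, e₂} : Finset E) := fun {m R} hR h₁ h₂ => by
    rw [eq_pair_of_ncard_eq_two hR h₁ h₂ (hne m), Finset.coe_pair, Set.image_pair]
  exact ⟨_, isComponentPerfectMatching_of_subset_image hij hik hjk hA hK.ncard_left hK.ncard_right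
    hSA (fun e => (hK.mem_iff e).symm.trans (hSA e)) Finset.card_le_two
    (hcover hA ((hSA _).1 h₁) ((hSA _).1 h₂)) (hcover hK.ncard_left h₁ h₂)
    (hcover hK.ncard_right ((hK.mem_iff _).1 h₁) ((hK.mem_iff _).1 h₂)) hb
    fun e he => hK.hconn_of_mem hb ((hK.mem_iff e).1 ((hSA e).2 he))⟩

theorem IsFourCycleComp.exists_perfectMatching_four (hij : i ≠ j) (hik : i ≠ k) (hjk : j ≠ k)
    {b b' : V j} {c c' : V k} {B B' : Set (V j)} {C C' : Set (V k)} {A A' Z Z' : Set (V i)}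
    (hK : IsFourCycleComp (ed · j) (ed · k) {b, b'} {c, c'})
    (hBA : IsFourCycleComp (ed · j) (ed · i) B A) (hb : b ∈ B)
    (hBA' : IsFourCycleComp (ed · j) (ed · i) B' A') (hb' : b' ∈ B')
    (hCZ : IsFourCycleComp (ed · k) (ed · i) C Z) (hc : c ∈ C)
    (hCZ' : IsFourCycleComp (ed · k) (ed · i) C' Z') (hc' : c' ∈ C')
    (hB : B ≠ B') (hC : C ≠ C') :
    ∃ M, IsComponentPerfectMatching ed ⟨j, b⟩ M ∧ M.card = 4 := by
  have hhosted : A ∪ A' = (ed · i) '' ((ed · j) ⁻¹' {b, b'}) :=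
    hBA.right_union_eq_image hb hBA' hb'
  have hAZ : A ∪ A' = Z ∪ Z' := by
    rw [hhosted, hCZ.right_union_eq_image hc hCZ' hc', hK.preimage_eq]
  obtain ⟨M, hcard, hAM, hBM, hCM⟩ :=
    hK.exists_four_edges_covering hBA hb hBA' hb' hCZ hc hCZ' hc' hB hC
  have hconnA : ∀ e, ed e i ∈ A ∪ A' → ∀ m, hconn ed ⟨j, b⟩ ⟨m, ed e m⟩ := by
    intro e he m
    obtain ⟨q, hq, hqe⟩ := hhosted ▸ he
    have hqi := hK.hconn_of_mem (Set.mem_insert b _) ((hK.mem_iff q).1 hq) i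
    exact hqi.tail ⟨e, hqe.symm, rfl⟩
  exact ⟨M, isComponentPerfectMatching_of_subset_image hij hik hjk
    (hBA.ncard_union_right hBA' hB) (hBA.ncard_union_left hBA' hB) (hCZ.ncard_union_left hCZ' hC)
    (hBA.mem_union_iff hBA') (hAZ ▸ hCZ.mem_union_iff hCZ') hcard hAM hBM hCM (Or.inl hb) hconnA⟩

end Hypergraph

theorem IsC4Comp.isFourCycleComp [∀ i, DecidableEq (V i)] [Fintype E] {ed : E → ∀ i, V i}
    {r : ℕ} {i j k : Fin 3} {b b' : V j} {c c' : V k} (hK : IsC4Comp ed r i j k b b' c c') :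
    IsFourCycleComp (ed · j) (ed · k) {b, b'} {c, c'} := by
  obtain ⟨-, -, -, hb, hc, hclosed, hbc, hbc', hb'c, hb'c', -⟩ := hK
  exact {
    ncard_left := Set.ncard_pair hb
    ncard_right := Set.ncard_pair hc
    mem_iff e := ⟨fun h => (hclosed e (h.imp_right Or.inl)).2,
      fun h => (hclosed e (Or.inr (Or.inr h))).1⟩
    exists_edge := by rintro _ (rfl | rfl) _ (rfl | rfl) <;> assumption }

theorem InC4Comp.exists_isFourCycleComp [∀ i, DecidableEq (V i)] [Fintype E]
    {ed : E → ∀ i, V i} {r : ℕ} {i j k : Fin 3} (hij : i ≠ j) (hik : i ≠ k) (hjk : j ≠ k)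
    {v : V j} (hv : InC4Comp ed r k v) :
    ∃ B A, v ∈ B ∧ IsFourCycleComp (ed · j) (ed · i) B A := by
  obtain ⟨l, v', a, a', hL⟩ := hv
  obtain rfl : l = i := by
    obtain ⟨-, hkl, hjl, -⟩ := hL
    omega
  exact ⟨_, _, Set.mem_insert v _, hL.isFourCycleComp⟩

theorem stmt6_general {ed : E → ∀ i, V i} {i j k : Fin 3} (hij : i ≠ j) (hik : i ≠ k)
    (hjk : j ≠ k) {b b' : V j} {c c' : V k}
    (hK : IsFourCycleComp (ed · j) (ed · k) {b, b'} {c, c'}) {e₁ e₂ : E}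
    (h₁ : ed e₁ j = b ∨ ed e₁ j = b') (h₂ : ed e₂ j = b ∨ ed e₂ j = b')
    (hne : ∀ m, ed e₁ m ≠ ed e₂ m)
    (hb : ∃ B A, b ∈ B ∧ IsFourCycleComp (ed · j) (ed · i) B A)
    (hb' : ∃ B A, b' ∈ B ∧ IsFourCycleComp (ed · j) (ed · i) B A)
    (hc : ∃ C A, c ∈ C ∧ IsFourCycleComp (ed · k) (ed · i) C A)
    (hc' : ∃ C A, c' ∈ C ∧ IsFourCycleComp (ed · k) (ed · i) C A) :
    ∃ M : Finset E,
      (∀ e1 ∈ M, ∀ e2 ∈ M, e1 ≠ e2 → ∀ m : Fin 3, ed e1 m ≠ ed e2 m) ∧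
      (∀ e ∈ M, ∀ m : Fin 3, hconn ed ⟨j, b⟩ ⟨m, ed e m⟩) ∧
      (∀ x : Σ m, V m, hconn ed ⟨j, b⟩ x → ∃ e ∈ M, ed e x.1 = x.2) ∧
      ((M.card = 2 ∧ ∀ m : Fin 3, {v : V m | hconn ed ⟨j, b⟩ ⟨m, v⟩}.ncard = 2) ∨
       (M.card = 4 ∧ ∀ m : Fin 3, {v : V m | hconn ed ⟨j, b⟩ ⟨m, v⟩}.ncard = 4)) := by
  obtain ⟨B, A, hb, hBA⟩ := hb
  obtain ⟨B', A', hb', hBA'⟩ := hb'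
  obtain ⟨C, Z, hc, hCZ⟩ := hc
  obtain ⟨C', Z', hc', hCZ'⟩ := hc'
  have hbK : b ∈ ({b, b'} : Set (V j)) := Set.mem_insert b _
  obtain ⟨M, hM, hcard⟩ :
      ∃ M, IsComponentPerfectMatching ed ⟨j, b⟩ M ∧ (M.card = 2 ∨ M.card = 4) := by
    by_cases hB : B = B'
    · subst hB
      obtain rfl : B = {b, b'} :=
        eq_pair_of_ncard_eq_two hBA.ncard_left hb hb' (ne_of_ncard_pair_eq_two hK.ncard_left)
      exact (hK.exists_perfectMatching_two hij hik hjk hBA.ncard_right hBA.mem_iff h₁ h₂ hne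
        hbK).imp fun M => And.imp_right Or.inl
    by_cases hC : C = C'
    · subst hC
      obtain rfl : C = {c, c'} :=
        eq_pair_of_ncard_eq_two hCZ.ncard_left hc hc' (ne_of_ncard_pair_eq_two hK.ncard_right)
      exact (hK.exists_perfectMatching_two hij hik hjk hCZ.ncard_right
        (fun e => (hK.mem_iff e).trans (hCZ.mem_iff e)) h₁ h₂ hne hbK).imp
        fun M => And.imp_right Or.inl
    exact (hK.exists_perfectMatching_four hij hik hjk hBA hb hBA' hb' hCZ hc hCZ' hc' hB hC).imp
      fun M => And.imp_right Or.inr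
  refine ⟨M, hM.ne, hM.hconn_of_mem, hM.exists_mem, ?_⟩
  simpa only [hM.ncard_component, implies_true, forall_const, and_self] using hcard

/-- Suppose `K` (with vertices `b, b' : V j` and `c, c' : V k`) is an `r`-regular `C₄`
component of the link of `V i`, `K` hosts two disjoint edges of `H`, and every vertex of
`K` belongs to an `r`-regular `C₄` component of the link of each of the other two vertex
classes (of which it is a vertex).  Then `K` belongs to a connected component of `H`
which either has exactly 2 vertices in each class and contains a matching of size 2, or
has exactly 4 vertices in each class and contains a matching of size 4; in particular
this component has a perfect matching. -/
theorem stmt6 [∀ i, DecidableEq (V i)] [Fintype E] [DecidableEq E]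
    (ed : E → ∀ i, V i) (r : ℕ) (i j k : Fin 3) (b b' : V j) (c c' : V k)
    (hK : IsC4Comp ed r i j k b b' c c')
    (hhost : ∃ e1 e2 : E,
      (ed e1 j = b ∨ ed e1 j = b') ∧ (ed e1 k = c ∨ ed e1 k = c') ∧
      (ed e2 j = b ∨ ed e2 j = b') ∧ (ed e2 k = c ∨ ed e2 k = c') ∧
      (∀ m : Fin 3, ed e1 m ≠ ed e2 m))
    (hb : InC4Comp ed r k b) (hb' : InC4Comp ed r k b')
    (hc : InC4Comp ed r j c) (hc' : InC4Comp ed r j c') :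
    ∃ M : Finset E,
      (∀ e1 ∈ M, ∀ e2 ∈ M, e1 ≠ e2 → ∀ m : Fin 3, ed e1 m ≠ ed e2 m) ∧
      (∀ e ∈ M, ∀ m : Fin 3, hconn ed ⟨j, b⟩ ⟨m, ed e m⟩) ∧
      (∀ x : Σ m, V m, hconn ed ⟨j, b⟩ x → ∃ e ∈ M, ed e x.1 = x.2) ∧
      ((M.card = 2 ∧ ∀ m : Fin 3, {v : V m | hconn ed ⟨j, b⟩ ⟨m, v⟩}.ncard = 2) ∨
       (M.card = 4 ∧ ∀ m : Fin 3, {v : V m | hconn ed ⟨j, b⟩ ⟨m, v⟩}.ncard = 4)) := by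
  obtain ⟨e₁, e₂, h₁, -, h₂, -, hne⟩ := hhost
  have ⟨hij, hik, hjk, _⟩ := hK
  exact stmt6_general hij hik hjk hK.isFourCycleComp h₁ h₂ hne
    (hb.exists_isFourCycleComp hij hik hjk) (hb'.exists_isFourCycleComp hij hik hjk)
    (hc.exists_isFourCycleComp hik hij hjk.symm) (hc'.exists_isFourCycleComp hik hij hjk.symm)

end Links
end
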